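/- The single-layer operator T : H̃^{-1/2}(Γ) → H^{1/2}(Γ) with kernel e^{ik|x−y|}/(4π|x−y|) is bijective with a bounded inverse; in particular, for every f ∈ H^{1/2}(Γ) the boundary integral equation Tψ = f has a unique solution ψ ∈ H̃^{-1/2}(Γ), and ‖ψ‖_{H^{-1/2}(ℝ²)} ≤ C ‖f‖_{H^{1/2}(Γ)} for a constant C independent of f. -/

import Mathlib

noncomputable section

open MeasureTheory Complex Filter Topology
open scoped Real NNReal ContDiff

/-- The plane `ℝ²`. -/
abbrev R2 : Type := EuclideanSpace ℝ (Fin 2)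

/-- Euclidean dot product on `ℝ²`. -/
def rdot (x ξ : R2) : ℝ := x 0 * ξ 0 + x 1 * ξ 1

/-- `testFT φ ξ = ∫ e^{i x·ξ} φ(x) dx`, the (inverse-type) Fourier integral of a
test function `φ`. -/
def testFT (φ : R2 → ℂ) (ξ : R2) : ℂ :=
  ∫ x : R2, Complex.exp (Complex.I * (rdot x ξ : ℂ)) * φ x

/-- The squared `H^s(ℝ²)` norm of the distribution whose Fourier transform is `F`:
`‖f‖² = (2π)⁻² ∫ (1+|ξ|²)^s |f̂(ξ)|² dξ`. -/
def wnormSq (s : ℝ) (F : R2 → ℂ) : ℝ :=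
  ((2 * π) ^ 2)⁻¹ * ∫ ξ : R2, ((1 : ℝ) + ‖ξ‖ ^ 2) ^ s * ‖F ξ‖ ^ 2

/-- The `H^s(ℝ²)` norm (Fourier-side representation). -/
def wnorm (s : ℝ) (F : R2 → ℂ) : ℝ := Real.sqrt (wnormSq s F)

/-- `F` is the Fourier transform of an element of `H^s(ℝ²)`. -/
def MemHs (s : ℝ) (F : R2 → ℂ) : Prop :=
  AEStronglyMeasurable F (volume : Measure R2) ∧
    Integrable (fun ξ : R2 => ((1 : ℝ) + ‖ξ‖ ^ 2) ^ s * ‖F ξ‖ ^ 2) volume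

/-- An element `f` of `H̃^s(Γ)`: a distribution on `ℝ²` of Sobolev regularity `s`
supported in the closure of `Γ`, represented by its Fourier transform `ft`
(a continuous function, `f` being a compactly supported distribution).
The support condition is expressed by testing against smooth compactly supported
functions `φ` whose support avoids `closure Γ`, via the Parseval pairing
`∫ f φ dx = (2π)⁻² ∫ f̂(ξ) φ̌(ξ) dξ` with `φ̌(ξ) = ∫ e^{ix·ξ} φ(x) dx`. -/
structure HTildeElt (s : ℝ) (Γ : Set R2) where
  ft : R2 → ℂ
  cont : Continuous ft
  mem : Integrable (fun ξ : R2 => ((1 : ℝ) + ‖ξ‖ ^ 2) ^ s * ‖ft ξ‖ ^ 2) volume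
  supp : ∀ φ : R2 → ℂ, ContDiff ℝ ∞ φ → HasCompactSupport φ →
    tsupport φ ∩ closure Γ = ∅ → (∫ ξ : R2, ft ξ * testFT φ ξ) = 0

/-- `Γ` is a bounded Lipschitz domain in `ℝ²`: a nonempty bounded open set whose
boundary is locally, after a rigid motion, the graph of a Lipschitz function with
the domain on one side. -/
def IsLipschitzDomain (Γ : Set R2) : Prop :=
  IsOpen Γ ∧ Bornology.IsBounded Γ ∧ Γ.Nonempty ∧
    ∀ x ∈ frontier Γ, ∃ (e : R2 ≃ₗᵢ[ℝ] R2) (L : ℝ≥0) (f : ℝ → ℝ) (U : Set R2),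
      LipschitzWith L f ∧ IsOpen U ∧ x ∈ U ∧
        ∀ y ∈ U, (y ∈ Γ ↔ f (e y 0) < e y 1)

/-- `ξ·V̂(ξ)`, i.e. `-i` times the Fourier transform of `div V`. -/
def dotFt (F1 F2 : R2 → ℂ) (ξ : R2) : ℂ := (ξ 0 : ℂ) * F1 ξ + (ξ 1 : ℂ) * F2 ξ

/-- `ξ⊥·V̂(ξ)`, i.e. `-i` times the Fourier transform of `curl V`. -/
def curlFt (F1 F2 : R2 → ℂ) (ξ : R2) : ℂ := (ξ 1 : ℂ) * F1 ξ - (ξ 0 : ℂ) * F2 ξ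

/-- An element of `X = H̃^{-1/2}_div(Γ)`: a pair of elements of `H̃^{-1/2}(Γ)`
whose distributional divergence also belongs to `H̃^{-1/2}(Γ)`. -/
structure Xelt (Γ : Set R2) where
  c1 : HTildeElt (-(1/2) : ℝ) Γ
  c2 : HTildeElt (-(1/2) : ℝ) Γ
  divMem : Integrable (fun ξ : R2 =>
    ((1 : ℝ) + ‖ξ‖ ^ 2) ^ (-(1/2) : ℝ) * ‖dotFt c1.ft c2.ft ξ‖ ^ 2) volume

/-- The Fourier transform of `div V`. -/
def divFt {Γ : Set R2} (V : Xelt Γ) (ξ : R2) : ℂ :=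
  Complex.I * dotFt V.c1.ft V.c2.ft ξ

/-- The squared `H`-norm `‖V‖²_H` of a vector field. -/
def HnormSq {Γ : Set R2} (V : Xelt Γ) : ℝ :=
  wnormSq (-(1/2)) V.c1.ft + wnormSq (-(1/2)) V.c2.ft

/-- The squared `X`-norm `‖V‖²_X = ‖V‖²_H + ‖div V‖²_{H̃^{-1/2}}`. -/
def XnormSq {Γ : Set R2} (V : Xelt Γ) : ℝ :=
  HnormSq V + wnormSq (-(1/2)) (divFt V)

/-- The `X`-norm. -/
def Xnorm {Γ : Set R2} (V : Xelt Γ) : ℝ := Real.sqrt (XnormSq V)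

/-- `ĝ₀(ξ) = i/√(k²-|ξ|²)`, with the branch `√(k²-|ξ|²) = i√(|ξ|²-k²)` for `|ξ| > k`. -/
def g0hat (k : ℝ) (ξ : R2) : ℂ :=
  if ‖ξ‖ < k then Complex.I / ((Real.sqrt (k ^ 2 - ‖ξ‖ ^ 2) : ℝ) : ℂ)
  else 1 / ((Real.sqrt (‖ξ‖ ^ 2 - k ^ 2) : ℝ) : ℂ)

/-- The integrand of the sesquilinear form `B`:
`ĝ₀(ξ) [ (|ξ|²-k²) a₁ b̄₁ - k² a₂ b̄₂ ]` with `a₁ = ξ·Ŵ/|ξ|`, `a₂ = ξ⊥·Ŵ/|ξ|`, etc. -/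
def Bintegrand (k : ℝ) (F1 F2 G1 G2 : R2 → ℂ) (ξ : R2) : ℂ :=
  g0hat k ξ *
    (((‖ξ‖ ^ 2 - k ^ 2 : ℝ) : ℂ) * (dotFt F1 F2 ξ * starRingEnd ℂ (dotFt G1 G2 ξ)) -
      ((k ^ 2 : ℝ) : ℂ) * (curlFt F1 F2 ξ * starRingEnd ℂ (curlFt G1 G2 ξ))) /
    ((‖ξ‖ ^ 2 : ℝ) : ℂ)

/-- The sesquilinear form `B(W,V)`. -/
def Bform (k : ℝ) {Γ : Set R2} (W V : Xelt Γ) : ℂ :=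
  ∫ ξ : R2, Bintegrand k W.c1.ft W.c2.ft V.c1.ft V.c2.ft ξ

/-- The sesquilinear form `E(q,V) = B(curl⃗ q, V)`, where
`curl⃗ q = (∂q/∂x₂, -∂q/∂x₁)` has Fourier transform `(iξ₂ q̂, -iξ₁ q̂)`. -/
def Eform (k : ℝ) {Γ : Set R2} (q : HTildeElt (1/2 : ℝ) Γ) (V : Xelt Γ) : ℂ :=
  ∫ ξ : R2, Bintegrand k (fun η => Complex.I * (η 1 : ℂ) * q.ft η)
      (fun η => -(Complex.I * (η 0 : ℂ) * q.ft η)) V.c1.ft V.c2.ft ξ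

/-- The inner product of the Hilbert space `X`; by the Riesz representation
theorem, every bounded conjugate-linear functional on `X` is `V ↦ Xinner Y V`
for a unique `Y ∈ X`, with functional norm `Xnorm Y`. -/
def Xinner {Γ : Set R2} (Y V : Xelt Γ) : ℂ :=
  ((((2 * π) ^ 2)⁻¹ : ℝ) : ℂ) * ∫ ξ : R2, ((((1 : ℝ) + ‖ξ‖ ^ 2) ^ (-(1/2) : ℝ) : ℝ) : ℂ) *
    (Y.c1.ft ξ * starRingEnd ℂ (V.c1.ft ξ) + Y.c2.ft ξ * starRingEnd ℂ (V.c2.ft ξ) +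
      divFt Y ξ * starRingEnd ℂ (divFt V ξ))

/-- `√(k²-|ξ|²)`, with the branch `i√(|ξ|²-k²)` for `|ξ| > k`. -/
def rootk (k : ℝ) (ξ : R2) : ℂ :=
  if ‖ξ‖ < k then ((Real.sqrt (k ^ 2 - ‖ξ‖ ^ 2) : ℝ) : ℂ)
  else Complex.I * ((Real.sqrt (‖ξ‖ ^ 2 - k ^ 2) : ℝ) : ℂ)

/-- The Fourier multiplier `i/(2√(k²-|ξ|²))` of the Helmholtz single-layer
operator `T` with kernel `e^{ik|x-y|}/(4π|x-y|)`. -/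
def mT (k : ℝ) (ξ : R2) : ℂ := Complex.I / (2 * rootk k ξ)

/-- The Fourier multiplier `1/(2|ξ|)` of the Laplace single-layer operator `T₀`
with kernel `1/(4π|x-y|)`. -/
def mT0 (ξ : R2) : ℂ := 1 / (2 * ((‖ξ‖ : ℝ) : ℂ))

/-- The Fourier multiplier of `R = T - T₀`. -/
def mR (k : ℝ) (ξ : R2) : ℂ := mT k ξ - mT0 ξ

/-- The distributions with Fourier data `G` and `E` have the same restriction to
the open set `Γ`: `⟨G - E, φ⟩ = 0` for all smooth `φ` compactly supported in `Γ`
(pairing written on the Fourier side). -/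
def AgreeOn (Γ : Set R2) (G E : R2 → ℂ) : Prop :=
  ∀ φ : R2 → ℂ, ContDiff ℝ ∞ φ → HasCompactSupport φ → tsupport φ ⊆ Γ →
    (∫ ξ : R2, (G ξ - E ξ) * testFT φ ξ) = 0

/-- The duality pairing `⟨f, ψ⟩` between `H^{1/2}(Γ)` and `H̃^{-1/2}(Γ)`, written
on the Fourier side (Plancherel): `(2π)⁻² ∫ f̂(ξ) conj(ψ̂(ξ)) dξ`, where `G = f̂`
is the Fourier data of (an extension of) `f`. -/
def dualPair (G ψ : R2 → ℂ) : ℂ :=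
  ((((2 * π) ^ 2)⁻¹ : ℝ) : ℂ) * ∫ ξ : R2, G ξ * starRingEnd ℂ (ψ ξ)

/-!
The symbol of `T` factors as `mT = σ w` with `w = |mT|` and `σ ∈ {1, i}`, so that
`Re ((1 - i) σ) = 1` and the form `⟨Tψ, φ⟩` is coercive for the energy norm `‖√w ψ̂‖` of `L²(ℝ²)`.
Lax–Milgram therefore solves the equation in the closure `V ⊆ L²` of `{√w φ̂ : φ ∈ C_c^∞(Γ)}`, and
what remains is that `V` consists exactly of the `√w ψ̂` with `ψ ∈ H̃^{-1/2}(Γ)`. One inclusion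
holds because elements of `V` are supported in the closure of the bounded set `Γ`, which makes their
Fourier transforms continuous; the other is the density of `C_c^∞(Γ)` in `H̃^{-1/2}(Γ)`: localize
by a partition of unity, translate each piece into `Γ` along the transversal direction given by the
boundary chart, and mollify. Off the circle `|ξ| = k`, `w` is bounded below by a multiple of
`(1 + |ξ|²)^{-1/2}`, so the energy norm controls the norm of `H^{-1/2}(ℝ²)`.
-/

section FourierIntegral

open scoped FourierTransform SchwartzMap

lemma rdot_eq_inner (x ξ : R2) : rdot x ξ = inner ℝ x ξ := by
  simp [PiLp.inner_apply, Fin.sum_univ_two, rdot, mul_comm]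

lemma rdot_comm (x ξ : R2) : rdot x ξ = rdot ξ x := by
  simp only [rdot_eq_inner, real_inner_comm]

lemma rdot_neg_right (x ξ : R2) : rdot x (-ξ) = -rdot x ξ := by
  simp only [rdot_eq_inner, inner_neg_right]

lemma rdot_neg_left (x ξ : R2) : rdot (-x) ξ = -rdot x ξ := by
  simp only [rdot_eq_inner, inner_neg_left]

lemma rdot_add_right (x ξ η : R2) : rdot x (ξ + η) = rdot x ξ + rdot x η := by
  simp only [rdot_eq_inner, inner_add_right]

lemma rdot_sub_left (x y ξ : R2) : rdot (x - y) ξ = rdot x ξ - rdot y ξ := by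
  simp only [rdot_eq_inner, inner_sub_left]

@[fun_prop]
lemma continuous_rdot {X : Type*} [TopologicalSpace X] {f g : X → R2} (hf : Continuous f)
    (hg : Continuous g) : Continuous fun a => rdot (f a) (g a) := by
  simp only [rdot_eq_inner]
  exact hf.inner hg

lemma norm_exp_I_mul_rdot (x ξ : R2) : ‖exp (I * (rdot x ξ : ℂ))‖ = 1 := by
  rw [mul_comm, norm_exp_ofReal_mul_I]

lemma integrable_exp_I_mul_rdot_mul {f : R2 → ℂ} (hf : Integrable f) (ξ : R2) :
    Integrable fun x => exp (I * (rdot x ξ : ℂ)) * f x :=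
  hf.bdd_mul (c := 1) (Continuous.aestronglyMeasurable (by fun_prop))
    (.of_forall fun x => (norm_exp_I_mul_rdot x ξ).le)

lemma testFT_eq_fourierInv (f : R2 → ℂ) (ξ : R2) : testFT f ξ = 𝓕⁻ f ((2 * π)⁻¹ • ξ) := by
  rw [Real.fourierInv_eq', testFT]
  congr 1 with x
  rw [smul_eq_mul, inner_smul_right, ← rdot_eq_inner, mul_inv_cancel_left₀ (by positivity),
    mul_comm I]

/-- The Fourier transform `f̂(ξ) = ∫ e^{-ix·ξ} f(x) dx`. -/
def fourierHat (f : R2 → ℂ) (ξ : R2) : ℂ := testFT f (-ξ)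

lemma testFT_const_mul (c : ℂ) (f : R2 → ℂ) (ξ : R2) :
    testFT (fun x => c * f x) ξ = c * testFT f ξ := by
  simp only [testFT, ← integral_const_mul, mul_left_comm]

lemma testFT_comp_neg (f : R2 → ℂ) (ξ : R2) : testFT (fun x => f (-x)) ξ = testFT f (-ξ) := by
  rw [testFT, testFT, ← integral_neg_eq_self]
  simp only [neg_neg, rdot_neg_left, rdot_neg_right]

lemma testFT_exp_mul (f : R2 → ℂ) (η ξ : R2) :
    testFT (fun x => exp (I * (rdot x η : ℂ)) * f x) ξ = testFT f (ξ + η) := by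
  simp only [testFT, ← mul_assoc, ← exp_add, rdot_add_right, ofReal_add, mul_add]

lemma testFT_comp_sub_left (f : R2 → ℂ) (a ξ : R2) :
    testFT (fun x => f (a - x)) ξ = exp (I * (rdot a ξ : ℂ)) * fourierHat f ξ := by
  rw [fourierHat, testFT, testFT, ← integral_const_mul, ← integral_sub_left_eq_self _ _ a]
  congr 1 with x
  rw [sub_sub_cancel, ← mul_assoc, ← exp_add, rdot_sub_left, rdot_neg_right]
  push_cast
  ring_nf

lemma fourierHat_conj (f : R2 → ℂ) (ξ : R2) :
    fourierHat (fun x => starRingEnd ℂ (f x)) ξ = starRingEnd ℂ (testFT f ξ) := by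
  rw [fourierHat, testFT, testFT, ← integral_conj]
  simp only [map_mul, ← exp_conj, conj_I, conj_ofReal, rdot_neg_right, ofReal_neg, neg_mul, mul_neg]

lemma integral_mul_testFT_eq_integral_testFT_mul {f g : R2 → ℂ} (hf : Integrable f)
    (hg : Integrable g) : ∫ ξ, f ξ * testFT g ξ = ∫ x, testFT f x * g x := by
  have hfg : Integrable (fun p : R2 × R2 =>
      exp (I * (rdot p.2 p.1 : ℂ)) * (f p.1 * g p.2)) (volume.prod volume) :=
    (hf.mul_prod hg).bdd_mul (c := 1) (Continuous.aestronglyMeasurable (by fun_prop))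
      (.of_forall fun p => (norm_exp_I_mul_rdot _ _).le)
  calc ∫ ξ, f ξ * testFT g ξ
      = ∫ ξ, ∫ x, exp (I * (rdot x ξ : ℂ)) * (f ξ * g x) := by
        simp only [testFT, ← integral_const_mul, mul_left_comm]
    _ = ∫ x, ∫ ξ, exp (I * (rdot x ξ : ℂ)) * (f ξ * g x) := integral_integral_swap hfg
    _ = ∫ x, testFT f x * g x := by
        simp only [testFT, ← integral_mul_const, mul_assoc, rdot_comm]

theorem fourierHat_testFT {f : R2 → ℂ} (hc : Continuous f) (hf : Integrable f)
    (hf' : Integrable (testFT f)) (x : R2) :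
    fourierHat (testFT f) x = (2 * π) ^ 2 * f x := by
  have hπ : (2 * π)⁻¹ ≠ 0 := by positivity
  have hscale : (fun ξ => 𝓕⁻ f ((2 * π)⁻¹ • ξ)) = testFT f :=
    funext fun ξ => (testFT_eq_fourierInv f ξ).symm
  have hinv : Integrable (𝓕⁻ f) := by
    rwa [← integrable_comp_smul_iff volume _ hπ, hscale]
  have hfou : Integrable (𝓕 f) := by
    simpa only [Real.fourierInv_eq_fourier_neg, neg_neg] using hinv.comp_neg
  have hinversion : ∫ w, exp (I * (rdot ((2 * π) • w) (-x) : ℂ)) * 𝓕⁻ f w = f x := by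
    rw [← congrFun (hc.fourier_fourierInv_eq hf hfou) x, Real.fourier_eq']
    congr 1 with w
    rw [smul_eq_mul, rdot_eq_inner, inner_smul_left, inner_neg_right, RCLike.conj_to_real,
      mul_comm I, mul_neg, neg_mul, neg_mul]
  have key := Measure.integral_comp_smul (volume : Measure R2) (fun w =>
    exp (I * (rdot ((2 * π) • w) (-x) : ℂ)) * 𝓕⁻ f w) (2 * π)⁻¹
  simp only [smul_inv_smul₀ (show (2 * π) ≠ 0 by positivity)] at key
  rw [fourierHat, testFT, ← hscale, key, hinversion]
  rw [finrank_euclideanSpace_fin, inv_pow, inv_inv, abs_of_pos (by positivity), real_smul]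
  push_cast
  rfl

/-- `testFT` as a map from Schwartz functions to Schwartz functions. -/
def schwartzTestFT (Φ : 𝓢(R2, ℂ)) : 𝓢(R2, ℂ) :=
  SchwartzMap.compCLMOfContinuousLinearEquiv ℂ
    (ContinuousLinearEquiv.smulLeft (Units.mk0 ((2 * π)⁻¹ : ℝ) (by positivity))) (𝓕⁻ Φ)

/-- `fourierHat` as a map from Schwartz functions to Schwartz functions. -/
def schwartzHat (Φ : 𝓢(R2, ℂ)) : 𝓢(R2, ℂ) :=
  SchwartzMap.compCLMOfContinuousLinearEquiv ℂ (ContinuousLinearEquiv.neg ℝ) (schwartzTestFT Φ)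

lemma coe_schwartzTestFT (Φ : 𝓢(R2, ℂ)) : ⇑(schwartzTestFT Φ) = testFT Φ := by
  ext ξ
  rw [testFT_eq_fourierInv, ← SchwartzMap.fourierInv_coe]
  rfl

lemma coe_schwartzHat (Φ : 𝓢(R2, ℂ)) : ⇑(schwartzHat Φ) = fourierHat Φ := by
  ext ξ
  rw [fourierHat, ← coe_schwartzTestFT]
  rfl

lemma fourierHat_testFT_schwartz (Φ : 𝓢(R2, ℂ)) (x : R2) :
    fourierHat (testFT Φ) x = (2 * π) ^ 2 * Φ x :=
  fourierHat_testFT Φ.continuous Φ.integrable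
    (by simpa only [coe_schwartzTestFT] using (schwartzTestFT Φ).integrable) x

theorem exists_testFT_eq_schwartz (Φ : 𝓢(R2, ℂ)) : ∃ Ψ : 𝓢(R2, ℂ), testFT Ψ = Φ := by
  refine ⟨((2 * π) ^ 2 : ℂ)⁻¹ • schwartzHat Φ, funext fun ξ => ?_⟩
  have hcoe : ⇑(((2 * π) ^ 2 : ℂ)⁻¹ • schwartzHat Φ) =
      fun x => ((2 * π) ^ 2 : ℂ)⁻¹ * testFT Φ (-x) := by
    ext x
    rw [← fourierHat, ← coe_schwartzHat]
    rfl
  rw [hcoe, testFT_const_mul, testFT_comp_neg, ← fourierHat, fourierHat_testFT_schwartz,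
    inv_mul_cancel_left₀ (by simp [Real.pi_ne_zero])]

theorem integral_fourierHat_sub_mul_testFT (χ φ : 𝓢(R2, ℂ)) (η : R2) :
    ∫ ξ, fourierHat χ (ξ - η) * testFT φ ξ = (2 * π) ^ 2 * testFT (fun x => χ x * φ x) η := by
  set f : R2 → ℂ := fun x => exp (I * (rdot x (-η) : ℂ)) * χ (-x) with hf
  have hfint : Integrable f :=
    integrable_exp_I_mul_rdot_mul χ.integrable.comp_neg (-η)
  have hhat : ∀ ξ, fourierHat χ (ξ - η) = testFT f ξ := fun ξ => by
    rw [hf, testFT_exp_mul (fun x => χ (-x)), testFT_comp_neg, fourierHat, sub_eq_add_neg]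
  have hφ : Integrable (testFT φ) := by
    simpa only [coe_schwartzTestFT] using (schwartzTestFT φ).integrable
  calc ∫ ξ, fourierHat χ (ξ - η) * testFT φ ξ
      = ∫ x, f x * testFT (testFT φ) x := by
        simp only [hhat, integral_mul_testFT_eq_integral_testFT_mul hfint hφ]
    _ = ∫ x, f (-x) * fourierHat (testFT φ) x := (integral_neg_eq_self _ _).symm
    _ = (2 * π) ^ 2 * testFT (fun x => χ x * φ x) η := by
        rw [testFT, ← integral_const_mul]
        simp only [hf, fourierHat_testFT_schwartz, rdot_neg_left, rdot_neg_right, neg_neg]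
        congr 1 with x
        ring

/-- `φ` is a test function on `U`: smooth, with compact support contained in `U`. -/
structure IsTestFunction (U : Set R2) (φ : R2 → ℂ) : Prop where
  contDiff : ContDiff ℝ ∞ φ
  hasCompactSupport : HasCompactSupport φ
  tsupport_subset : tsupport φ ⊆ U

namespace IsTestFunction

variable {U V : Set R2} {φ ψ : R2 → ℂ}

/-- A test function, as a Schwartz function. -/
def toSchwartz (hφ : IsTestFunction U φ) : 𝓢(R2, ℂ) :=
  hφ.hasCompactSupport.toSchwartzMap hφ.contDiff

lemma mono (hφ : IsTestFunction U φ) (h : U ⊆ V) : IsTestFunction V φ :=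
  ⟨hφ.contDiff, hφ.hasCompactSupport, hφ.tsupport_subset.trans h⟩

lemma mul (hφ : IsTestFunction U φ) (hψ : IsTestFunction V ψ) :
    IsTestFunction (U ∩ V) (fun x => φ x * ψ x) :=
  ⟨hφ.contDiff.mul hψ.contDiff, hφ.hasCompactSupport.mul_right,
    Set.subset_inter ((tsupport_mul_subset_left).trans hφ.tsupport_subset)
      ((tsupport_mul_subset_right).trans hψ.tsupport_subset)⟩

lemma const_mul (hφ : IsTestFunction U φ) (c : ℂ) : IsTestFunction U (fun x => c * φ x) :=
  ⟨contDiff_const.mul hφ.contDiff, hφ.hasCompactSupport.mul_left,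
    tsupport_mul_subset_right.trans hφ.tsupport_subset⟩

lemma conj (hφ : IsTestFunction U φ) : IsTestFunction U (fun x => starRingEnd ℂ (φ x)) :=
  ⟨conjCLE.contDiff.comp hφ.contDiff, hφ.hasCompactSupport.comp_left (map_zero _),
    (closure_mono (Function.support_comp_subset (map_zero _) φ)).trans hφ.tsupport_subset⟩

lemma comp_sub_left (hφ : IsTestFunction U φ) (x : R2) :
    IsTestFunction ((fun y => x - y) ⁻¹' U) (fun y => φ (x - y)) :=
  ⟨hφ.contDiff.comp (contDiff_const.sub contDiff_id),
    hφ.hasCompactSupport.comp_homeomorph (Homeomorph.subLeft x),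
    (tsupport_comp_subset_preimage φ (by fun_prop)).trans
      (Set.preimage_mono hφ.tsupport_subset)⟩

end IsTestFunction

end FourierIntegral

section SobolevWeight

open scoped SchwartzMap

variable {E : Type*}

/-- The weight `(1 + |ξ|²)^s` of the Sobolev norms. -/
def sobolevWeight [NormedAddCommGroup E] (s : ℝ) (ξ : E) : ℝ := (1 + ‖ξ‖ ^ 2) ^ s

section NormedAddCommGroup

variable [NormedAddCommGroup E]

lemma sobolevWeight_pos (s : ℝ) (ξ : E) : 0 < sobolevWeight s ξ :=
  Real.rpow_pos_of_pos (by positivity) s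

lemma sobolevWeight_add (s t : ℝ) (ξ : E) :
    sobolevWeight (s + t) ξ = sobolevWeight s ξ * sobolevWeight t ξ :=
  Real.rpow_add (by positivity) s t

lemma sobolevWeight_neg_mul_self (s : ℝ) (ξ : E) :
    sobolevWeight (-s) ξ * sobolevWeight s ξ = 1 := by
  rw [← sobolevWeight_add, neg_add_cancel, sobolevWeight, Real.rpow_zero]

lemma sobolevWeight_half_sq (s : ℝ) (ξ : E) : sobolevWeight (s / 2) ξ ^ 2 = sobolevWeight s ξ := by
  rw [pow_two, ← sobolevWeight_add, add_halves]

@[fun_prop]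
lemma continuous_sobolevWeight (s : ℝ) : Continuous (sobolevWeight s : E → ℝ) :=
  Continuous.rpow_const (by fun_prop) fun ξ => .inl (by positivity)

lemma sobolevWeight_one_le (ξ η : E) :
    sobolevWeight 1 ξ ≤ 2 * sobolevWeight 1 η * sobolevWeight 1 (ξ - η) := by
  simp only [sobolevWeight, Real.rpow_one]
  have := norm_add_le (ξ - η) η
  rw [sub_add_cancel] at this
  nlinarith [sq_nonneg (‖ξ - η‖ - ‖η‖), mul_nonneg (sq_nonneg ‖η‖) (sq_nonneg ‖ξ - η‖),
    norm_nonneg ξ, pow_le_pow_left₀ (norm_nonneg ξ) this 2]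

lemma sobolevWeight_eq_rpow (s : ℝ) (ξ : E) : sobolevWeight s ξ = sobolevWeight 1 ξ ^ s := by
  rw [sobolevWeight, sobolevWeight, Real.rpow_one]

lemma sobolevWeight_sub_comm (s : ℝ) (ξ η : E) :
    sobolevWeight s (ξ - η) = sobolevWeight s (η - ξ) := by
  rw [sobolevWeight, sobolevWeight, norm_sub_rev]

/-- Peetre's inequality. -/
lemma sobolevWeight_le_mul_sub (s : ℝ) (ξ η : E) :
    sobolevWeight s ξ ≤ 2 ^ |s| * sobolevWeight s η * sobolevWeight |s| (ξ - η) := by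
  have hnonneg : ∀ {t : ℝ}, 0 ≤ t → ∀ ξ η : E,
      sobolevWeight t ξ ≤ 2 ^ t * sobolevWeight t η * sobolevWeight t (ξ - η) := by
    intro t ht ξ η
    simp only [sobolevWeight_eq_rpow t]
    rw [← Real.mul_rpow (by positivity) (sobolevWeight_pos 1 η).le,
      ← Real.mul_rpow (mul_nonneg zero_le_two (sobolevWeight_pos 1 η).le)
        (sobolevWeight_pos 1 _).le]
    exact Real.rpow_le_rpow (sobolevWeight_pos 1 ξ).le (sobolevWeight_one_le ξ η) ht
  rcases le_total 0 s with hs | hs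
  · rw [abs_of_nonneg hs]
    exact hnonneg hs ξ η
  · rw [abs_of_nonpos hs]
    have h := hnonneg (neg_nonneg.2 hs) η ξ
    calc sobolevWeight s ξ
        = sobolevWeight s ξ * (sobolevWeight (-s) η * sobolevWeight s η) := by
          rw [sobolevWeight_neg_mul_self, mul_one]
      _ ≤ sobolevWeight s ξ * ((2 ^ (-s) * sobolevWeight (-s) ξ * sobolevWeight (-s) (ξ - η)) *
            sobolevWeight s η) := by
          rw [sobolevWeight_sub_comm]
          gcongr
          exacts [(sobolevWeight_pos s ξ).le, (sobolevWeight_pos s η).le]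
      _ = 2 ^ (-s) * sobolevWeight s η * sobolevWeight (-s) (ξ - η) *
            (sobolevWeight (-s) ξ * sobolevWeight s ξ) := by ring
      _ = _ := by rw [sobolevWeight_neg_mul_self, mul_one]

end NormedAddCommGroup

lemma integrable_sobolevWeight [NormedAddCommGroup E] [NormedSpace ℝ E] [FiniteDimensional ℝ E]
    [MeasurableSpace E] [BorelSpace E] (μ : Measure E) [μ.IsAddHaarMeasure] {s : ℝ}
    (hs : s < -(Module.finrank ℝ E : ℝ) / 2) : Integrable (sobolevWeight s : E → ℝ) μ := by
  have := integrable_rpow_neg_one_add_norm_sq (μ := μ) (r := -2 * s) (by linarith)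
  rwa [show -(-2 * s) / 2 = s by ring] at this

section Schwartz

variable [NormedAddCommGroup E] [InnerProductSpace ℝ E] {F : Type*} [NormedAddCommGroup F]
  [NormedSpace ℝ F]

lemma exists_schwartz_eq_sobolevWeight_smul (s : ℝ) (S : 𝓢(E, F)) :
    ∃ T : 𝓢(E, F), ∀ ξ, T ξ = sobolevWeight s ξ • S ξ :=
  ⟨SchwartzMap.smulLeftCLM F (sobolevWeight s) S, SchwartzMap.smulLeftCLM_apply_apply
    (Function.hasTemperateGrowth_one_add_norm_sq_rpow E s) S⟩

lemma exists_sobolevWeight_mul_norm_schwartz_le (s : ℝ) (S : 𝓢(E, F)) :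
    ∃ C, ∀ ξ, sobolevWeight s ξ * ‖S ξ‖ ≤ C := by
  obtain ⟨T, hT⟩ := exists_schwartz_eq_sobolevWeight_smul s S
  refine ⟨SchwartzMap.seminorm ℝ 0 0 T, fun ξ => ?_⟩
  rw [← abs_of_pos (sobolevWeight_pos s ξ), ← Real.norm_eq_abs, ← norm_smul, ← hT]
  exact T.norm_le_seminorm ℝ ξ

lemma exists_norm_schwartz_sub_le (s : ℝ) (S : 𝓢(E, F)) :
    ∃ C, ∀ ξ η, ‖S (ξ - η)‖ ≤ C * sobolevWeight s ξ * sobolevWeight (-s) η := by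
  obtain ⟨C, hC⟩ := exists_sobolevWeight_mul_norm_schwartz_le |s| S
  refine ⟨2 ^ |s| * C, fun ξ η => ?_⟩
  have hξ := sobolevWeight_pos s ξ
  have hη := sobolevWeight_pos (-s) η
  calc ‖S (ξ - η)‖ = sobolevWeight (-s) η * sobolevWeight s η * ‖S (ξ - η)‖ := by
        rw [sobolevWeight_neg_mul_self, one_mul]
    _ ≤ sobolevWeight (-s) η * (2 ^ |s| * sobolevWeight s ξ * sobolevWeight |s| (ξ - η)) *
          ‖S (ξ - η)‖ := by
        rw [sobolevWeight_sub_comm]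
        gcongr
        exact sobolevWeight_le_mul_sub s η ξ
    _ = 2 ^ |s| * (sobolevWeight |s| (ξ - η) * ‖S (ξ - η)‖) * sobolevWeight s ξ *
          sobolevWeight (-s) η := by ring
    _ ≤ 2 ^ |s| * C * sobolevWeight s ξ * sobolevWeight (-s) η := by
        gcongr
        exact hC _

end Schwartz

end SobolevWeight

section SobolevSpace

open scoped SchwartzMap

variable {s : ℝ} {ψ g : R2 → ℂ}

lemma memHs_iff : MemHs s ψ ↔ AEStronglyMeasurable ψ volume ∧
    Integrable (fun ξ => sobolevWeight s ξ * ‖ψ ξ‖ ^ 2) volume := Iff.rfl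

lemma memHs_iff_memLp :
    MemHs s ψ ↔ MemLp (fun ξ => sobolevWeight (s / 2) ξ • ψ ξ) 2 volume := by
  have hsq : ∀ ξ, ‖sobolevWeight (s / 2) ξ • ψ ξ‖ ^ 2 = sobolevWeight s ξ * ‖ψ ξ‖ ^ 2 := fun ξ => by
    rw [norm_smul, mul_pow, Real.norm_eq_abs, sq_abs, sobolevWeight_half_sq]
  have hmeas : AEStronglyMeasurable ψ volume ↔
      AEStronglyMeasurable (fun ξ => sobolevWeight (s / 2) ξ • ψ ξ) volume := by
    refine ⟨(continuous_sobolevWeight _).aestronglyMeasurable.smul, fun h => ?_⟩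
    refine ((continuous_sobolevWeight (-(s / 2))).aestronglyMeasurable.smul h).congr
      (.of_forall fun ξ => ?_)
    simp only [Pi.smul_apply', smul_smul, sobolevWeight_neg_mul_self, one_smul]
  rw [memHs_iff, hmeas]
  simp only [← hsq]
  exact ⟨fun h => (memLp_two_iff_integrable_sq_norm h.1).2 h.2,
    fun h => ⟨h.1, (memLp_two_iff_integrable_sq_norm h.1).1 h⟩⟩

namespace MemHs

lemma sub (hψ : MemHs s ψ) (hg : MemHs s g) : MemHs s (fun ξ => ψ ξ - g ξ) := by
  rw [memHs_iff_memLp] at *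
  simpa only [smul_sub] using! hψ.sub hg

lemma integrable_mul (hψ : MemHs s ψ) (hg : MemHs (-s) g) : Integrable fun ξ => ψ ξ * g ξ := by
  rw [memHs_iff_memLp] at *
  refine (MemLp.integrable_mul hψ hg).congr (.of_forall fun ξ => ?_)
  simp only [Pi.mul_apply, smul_mul_smul_comm, neg_div, mul_comm (sobolevWeight (s / 2) ξ),
    sobolevWeight_neg_mul_self, one_smul]

end MemHs

lemma memHs_schwartz (S : 𝓢(R2, ℂ)) (s : ℝ) : MemHs s S := by
  obtain ⟨T, hT⟩ := exists_schwartz_eq_sobolevWeight_smul (s / 2) S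
  simpa only [memHs_iff_memLp, ← hT] using T.memLp 2 volume

lemma memHs_sobolevWeight {t : ℝ} (h : s + 2 * t < -1) :
    MemHs s (fun ξ => (sobolevWeight t ξ : ℂ)) := by
  refine memHs_iff.2 ⟨Continuous.aestronglyMeasurable (by fun_prop),
    (integrable_sobolevWeight (E := R2) (s := s + 2 * t) volume (by simpa using h)).congr
      (.of_forall fun ξ => ?_)⟩
  simp only [two_mul, sobolevWeight_add, norm_real, Real.norm_eq_abs, sq_abs]
  rw [pow_two]

lemma MemHs.integrable_sobolevWeight_mul_norm (hψ : MemHs s ψ) {t : ℝ} (h : 2 * t < s - 1) :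
    Integrable fun ξ => sobolevWeight t ξ * ‖ψ ξ‖ := by
  refine (hψ.integrable_mul (memHs_sobolevWeight (t := t) (by linarith))).norm.congr
    (.of_forall fun ξ => ?_)
  simp only [norm_mul, norm_real, Real.norm_eq_abs, abs_of_pos (sobolevWeight_pos _ _), mul_comm]

end SobolevSpace

section Mollification

open scoped FourierTransform SchwartzMap Pointwise

lemma norm_fourierHat_le_integral_norm (f : R2 → ℂ) (ξ : R2) :
    ‖fourierHat f ξ‖ ≤ ∫ x, ‖f x‖ := by
  refine (norm_integral_le_integral_norm _).trans_eq ?_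
  simp only [norm_mul, norm_exp_I_mul_rdot, one_mul]

lemma norm_fourierHat_sub_integral_le {f : R2 → ℂ} (hf : Integrable f) {R : ℝ}
    (hR : ∀ x, f x ≠ 0 → ‖x‖ ≤ R) (ξ : R2) :
    ‖fourierHat f ξ - ∫ x, f x‖ ≤ R * ‖ξ‖ * ∫ x, ‖f x‖ := by
  rw [fourierHat, testFT, ← integral_sub (integrable_exp_I_mul_rdot_mul hf _) hf,
    ← integral_const_mul]
  refine norm_integral_le_of_norm_le (hf.norm.const_mul _) (.of_forall fun x => ?_)
  rw [← sub_one_mul, norm_mul]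
  rcases eq_or_ne (f x) 0 with hx | hx
  · simp [hx]
  · gcongr
    calc ‖exp (I * (rdot x (-ξ) : ℂ)) - 1‖ ≤ ‖rdot x (-ξ)‖ := Real.norm_exp_I_mul_ofReal_sub_one_le
      _ ≤ ‖x‖ * ‖ξ‖ := by
        rw [rdot_eq_inner, ← norm_neg ξ]
        exact norm_inner_le_norm _ _
      _ ≤ R * ‖ξ‖ := by
        gcongr
        exact hR x hx

theorem exists_isTestFunction_norm_fourierHat_sub_one_le (a : R2) {ε : ℝ} (hε : 0 < ε) :
    ∃ η, IsTestFunction (Metric.closedBall a ε) η ∧ (∀ ξ, ‖fourierHat η ξ‖ ≤ 1) ∧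
      ∀ ξ, ‖fourierHat η ξ - 1‖ ≤ (‖a‖ + ε) * ‖ξ‖ := by
  let f : ContDiffBump a := ⟨ε / 2, ε, by positivity, by linarith⟩
  have hint : Integrable fun x => (f.normed volume x : ℂ) := f.integrable_normed.ofReal
  have hnorm : ∫ x, ‖(f.normed volume x : ℂ)‖ = 1 := by
    simp only [norm_real, Real.norm_of_nonneg (f.nonneg_normed _), f.integral_normed]
  have hone : ∫ x, (f.normed volume x : ℂ) = 1 := by
    rw [integral_complex_ofReal, f.integral_normed, ofReal_one]
  have hsupp : Function.support (fun x => (f.normed volume x : ℂ)) ⊆ Metric.closedBall a ε := by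
    intro x hx
    have : x ∈ Function.support (f.normed volume) := by simpa using hx
    rw [f.support_normed_eq] at this
    exact Metric.ball_subset_closedBall this
  refine ⟨fun x => f.normed volume x, ⟨ofRealCLM.contDiff.comp f.contDiff_normed,
    f.hasCompactSupport_normed.comp_left ofReal_zero,
    closure_minimal hsupp Metric.isClosed_closedBall⟩, fun ξ => ?_, fun ξ => ?_⟩
  · exact (norm_fourierHat_le_integral_norm _ ξ).trans_eq hnorm
  · have h := norm_fourierHat_sub_integral_le hint (R := ‖a‖ + ε) (fun x hx =>
      norm_le_norm_add_const_of_dist_le (hsupp hx)) ξ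
    rwa [hone, hnorm, mul_one] at h

theorem ae_eq_zero_of_testFT_eq_zero {f : R2 → ℂ} (hf : Integrable f) (h : ∀ x, testFT f x = 0) :
    f =ᵐ[volume] 0 := by
  refine ae_eq_zero_of_integral_contDiff_smul_eq_zero hf.locallyIntegrable fun g hg hgc => ?_
  have hg' : IsTestFunction Set.univ (fun x => (g x : ℂ)) :=
    ⟨ofRealCLM.contDiff.comp hg, hgc.comp_left ofReal_zero, Set.subset_univ _⟩
  obtain ⟨Φ, hΦ⟩ := exists_testFT_eq_schwartz hg'.toSchwartz
  calc ∫ x, g x • f x = ∫ x, f x * testFT Φ x := by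
        simp only [hΦ, real_smul, mul_comm]
        rfl
    _ = 0 := by
        simp only [integral_mul_testFT_eq_integral_testFT_mul hf Φ.integrable, h, zero_mul,
          integral_zero]

lemma testFT_mul_fourierHat (ψ η : R2 → ℂ) (x : R2) :
    testFT (fun ξ => ψ ξ * fourierHat η ξ) x = ∫ ξ, ψ ξ * testFT (fun y => η (x - y)) ξ := by
  simp only [testFT_comp_sub_left]
  simp only [testFT, rdot_comm x, mul_left_comm]

lemma IsTestFunction.memHs_fourierHat {U : Set R2} {η : R2 → ℂ} (hη : IsTestFunction U η)
    (s : ℝ) : MemHs s (fourierHat η) := by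
  have := memHs_schwartz (schwartzHat hη.toSchwartz) s
  rwa [coe_schwartzHat] at this

lemma IsTestFunction.memHs_testFT {U : Set R2} {φ : R2 → ℂ} (hφ : IsTestFunction U φ)
    (s : ℝ) : MemHs s (testFT φ) := by
  have := memHs_schwartz (schwartzTestFT hφ.toSchwartz) s
  rwa [coe_schwartzTestFT] at this

theorem MemHs.ae_eq_zero {s : ℝ} {ψ : R2 → ℂ} (hψ : MemHs s ψ)
    (h : ∀ φ, IsTestFunction Set.univ φ → ∫ ξ, ψ ξ * testFT φ ξ = 0) : ψ =ᵐ[volume] 0 := by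
  choose η hη _ hη1 using fun n : ℕ =>
    exists_isTestFunction_norm_fourierHat_sub_one_le 0 (ε := 1 / ((n : ℝ) + 1)) (by positivity)
  have hzero : ∀ n, (fun ξ => ψ ξ * fourierHat (η n) ξ) =ᵐ[volume] 0 := fun n => by
    refine ae_eq_zero_of_testFT_eq_zero (hψ.integrable_mul ((hη n).memHs_fourierHat _)) fun x => ?_
    rw [testFT_mul_fourierHat, h _ (((hη n).comp_sub_left x).mono (Set.subset_univ _))]
  filter_upwards [ae_all_iff.2 hzero] with ξ hξ
  have hlim : Tendsto (fun n => fourierHat (η n) ξ) atTop (𝓝 1) := by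
    rw [tendsto_iff_norm_sub_tendsto_zero]
    refine squeeze_zero (fun n => norm_nonneg _) (fun n => hη1 n ξ) ?_
    simpa using (tendsto_one_div_add_atTop_nhds_zero_nat (𝕜 := ℝ)).mul_const ‖ξ‖
  simpa [hξ] using tendsto_nhds_unique (hlim.const_mul (ψ ξ))
    (tendsto_const_nhds.congr fun n => (hξ n).symm)

/-- The distribution with Fourier transform `ψ` vanishes on the complement of `K`. -/
def SupportedIn (K : Set R2) (ψ : R2 → ℂ) : Prop :=
  ∀ φ, IsTestFunction Kᶜ φ → ∫ ξ, ψ ξ * testFT φ ξ = 0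

lemma contDiff_testFT {f : R2 → ℂ} (hf : ∀ n : ℕ, Integrable fun ξ => ‖ξ‖ ^ n * ‖f ξ‖) :
    ContDiff ℝ ∞ (testFT f) := by
  have heq : testFT f = fun x => 𝓕 f (-((2 * π)⁻¹ • x)) := by
    ext x
    rw [testFT_eq_fourierInv, Real.fourierInv_eq_fourier_neg]
  rw [heq]
  exact (Real.contDiff_fourier fun n _ => hf n).comp (contDiff_id.const_smul _).neg

lemma MemHs.integrable_pow_mul_norm_mul {s : ℝ} {ψ : R2 → ℂ} (hψ : MemHs s ψ) (S : 𝓢(R2, ℂ))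
    (n : ℕ) : Integrable fun ξ => ‖ξ‖ ^ n * ‖ψ ξ * S ξ‖ := by
  obtain ⟨T, hT⟩ := exists_schwartz_eq_sobolevWeight_smul (n / 2 : ℝ) S
  have hmeas : AEStronglyMeasurable (fun ξ => ‖ξ‖ ^ n * ‖ψ ξ * S ξ‖) volume :=
    Continuous.aestronglyMeasurable (by fun_prop) |>.mul
      (hψ.1.mul S.continuous.aestronglyMeasurable).norm
  refine (hψ.integrable_mul (memHs_schwartz T _)).mono hmeas (.of_forall fun ξ => ?_)
  have hpow : ‖ξ‖ ^ n ≤ sobolevWeight (n / 2) ξ := by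
    calc ‖ξ‖ ^ n = (‖ξ‖ ^ 2) ^ (n / 2 : ℝ) := by
          rw [← Real.rpow_natCast_mul (norm_nonneg ξ), Nat.cast_ofNat,
            mul_div_cancel₀ _ two_ne_zero, Real.rpow_natCast]
      _ ≤ sobolevWeight (n / 2) ξ :=
          Real.rpow_le_rpow (by positivity) (by linarith) (by positivity)
  rw [hT, norm_mul, norm_norm, norm_mul, norm_mul, norm_smul, norm_pow, norm_norm, mul_left_comm,
    Real.norm_of_nonneg (sobolevWeight_pos _ ξ).le]
  gcongr

/-- `ψ * fourierHat η` is the Fourier transform of the mollification by `η` of the distribution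
with Fourier transform `ψ`. -/
theorem MemHs.exists_isTestFunction_fourierHat_eq {s : ℝ} {ψ η : R2 → ℂ} {K V : Set R2}
    (hψ : MemHs s ψ) (hc : Continuous ψ) (hsupp : SupportedIn K ψ) (hK : IsCompact K)
    (hη : IsTestFunction V η) :
    ∃ φ, IsTestFunction (K + V) φ ∧ ∀ ξ, fourierHat φ ξ = ψ ξ * fourierHat η ξ := by
  set f : R2 → ℂ := fun ξ => ψ ξ * fourierHat η ξ
  have hη_coe : ⇑(schwartzHat hη.toSchwartz) = fourierHat η := coe_schwartzHat _
  have hfint : Integrable f := hψ.integrable_mul (hη.memHs_fourierHat _)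
  have hfcont : Continuous f := hc.mul (hη_coe ▸ (schwartzHat hη.toSchwartz).continuous)
  have hsmooth : ContDiff ℝ ∞ (testFT f) := contDiff_testFT fun n => by
    simpa only [hη_coe] using hψ.integrable_pow_mul_norm_mul (schwartzHat hη.toSchwartz) n
  have hsub : Function.support (testFT f) ⊆ K + tsupport η := by
    intro x hx
    by_contra hxn
    refine hx ?_
    rw [testFT_mul_fourierHat]
    refine hsupp _ ((IsTestFunction.comp_sub_left
      ⟨hη.contDiff, hη.hasCompactSupport, subset_rfl⟩ x).mono fun y hy hyK => hxn ?_)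
    exact ⟨y, hyK, x - y, hy, add_sub_cancel y x⟩
  have hcompact : IsCompact (K + tsupport η) := hK.add hη.hasCompactSupport
  have htsub : tsupport (testFT f) ⊆ K + tsupport η := closure_minimal hsub hcompact.isClosed
  have htest : IsTestFunction (K + V) (testFT f) :=
    ⟨hsmooth, hcompact.of_isClosed_subset (isClosed_tsupport _) htsub,
      htsub.trans (Set.add_subset_add_left hη.tsupport_subset)⟩
  refine ⟨fun x => ((2 * π) ^ 2 : ℂ)⁻¹ * testFT f x, htest.const_mul _, fun ξ => ?_⟩
  rw [fourierHat, testFT_const_mul, ← fourierHat,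
    fourierHat_testFT hfcont hfint htest.toSchwartz.integrable, inv_mul_cancel_left₀ (by simp)]

end Mollification

section Convolution

variable {α : Type*} [MeasurableSpace α]

lemma sq_integral_mul_le {μ : Measure α} {f h : α → ℝ} (hh0 : ∀ x, 0 ≤ h x)
    (hh : Integrable h μ) (hfh : Integrable (fun x => f x ^ 2 * h x) μ) :
    (∫ x, f x * h x ∂μ) ^ 2 ≤ (∫ x, f x ^ 2 * h x ∂μ) * ∫ x, h x ∂μ := by
  by_cases hint : Integrable (fun x => f x * h x) μ
  · have hquad : ∀ t : ℝ, 0 ≤ (∫ x, f x ^ 2 * h x ∂μ) * (t * t) +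
        -2 * (∫ x, f x * h x ∂μ) * t + ∫ x, h x ∂μ := fun t => by
      calc 0 ≤ ∫ x, (t * f x - 1) ^ 2 * h x ∂μ :=
            integral_nonneg fun x => mul_nonneg (sq_nonneg _) (hh0 x)
        _ = ∫ x, f x ^ 2 * h x * (t * t) + f x * h x * (-2 * t) + h x ∂μ := by
            congr 1 with x
            ring
        _ = _ := by
            rw [integral_add (by exact (hfh.mul_const _).add (hint.mul_const _)) hh,
              integral_add (hfh.mul_const _) (hint.mul_const _), integral_mul_const,
              integral_mul_const]
            ring
    have := discrim_le_zero hquad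
    rw [discrim] at this
    linarith
  · rw [integral_undef hint, zero_pow two_ne_zero]
    exact mul_nonneg (integral_nonneg fun x => mul_nonneg (sq_nonneg _) (hh0 x))
      (integral_nonneg hh0)

/-- Young's convolution inequality for `L² * L¹`. -/
theorem memLp_two_of_norm_le_convolution [AddCommGroup α] [MeasurableAdd₂ α] [MeasurableNeg α]
    {μ : Measure α} [SFinite μ] [μ.IsAddLeftInvariant] [μ.IsNegInvariant] {E : Type*}
    [NormedAddCommGroup E] {F : α → E} {g h : α → ℝ} (hF : AEStronglyMeasurable F μ)
    (hg : MemLp g 2 μ) (hh : Integrable h μ) (hh0 : ∀ x, 0 ≤ h x)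
    (hle : ∀ x, ‖F x‖ ≤ ∫ y, g y * h (x - y) ∂μ) : MemLp F 2 μ := by
  have hconv := hg.integrable_sq.convolution_integrand (ContinuousLinearMap.mul ℝ ℝ) hh
  refine (memLp_two_iff_integrable_sq_norm hF).2
    ((hconv.integral_prod_left.mul_const (∫ x, h x ∂μ)).mono' (hF.norm.pow 2) ?_)
  filter_upwards [hconv.prod_right_ae] with x hx
  rw [Real.norm_of_nonneg (sq_nonneg _)]
  calc ‖F x‖ ^ 2 ≤ (∫ y, g y * h (x - y) ∂μ) ^ 2 := by gcongr; exact hle x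
    _ ≤ (∫ y, g y ^ 2 * h (x - y) ∂μ) * ∫ y, h (x - y) ∂μ :=
        sq_integral_mul_le (fun y => hh0 _) (hh.comp_sub_left x) hx
    _ = _ := by rw [integral_sub_left_eq_self]; rfl

end Convolution

section Cutoff

open scoped SchwartzMap

variable {s : ℝ} {U K W : Set R2} {χ ψ φ : R2 → ℂ}

/-- The Fourier transform of the product of a smooth function `χ` with the distribution whose
Fourier transform is `ψ`, that is, `(2π)⁻² χ̂ ∗ ψ`. -/
def fourierCutoff (χ ψ : R2 → ℂ) (ξ : R2) : ℂ :=
  ((2 * π) ^ 2 : ℂ)⁻¹ * ∫ η, ψ η * fourierHat χ (ξ - η)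

lemma IsTestFunction.continuous_fourierHat (hχ : IsTestFunction U χ) :
    Continuous (fourierHat χ) := by
  have := (schwartzHat hχ.toSchwartz).continuous
  rwa [coe_schwartzHat] at this

lemma IsTestFunction.exists_norm_mul_fourierHat_sub_le (hχ : IsTestFunction U χ) (ψ : R2 → ℂ)
    (t : ℝ) : ∃ C, ∀ ξ η, ‖ψ η * fourierHat χ (ξ - η)‖ ≤
      C * sobolevWeight (-t) ξ * (sobolevWeight t η * ‖ψ η‖) := by
  obtain ⟨C, hC⟩ := exists_norm_schwartz_sub_le (-t) (schwartzHat hχ.toSchwartz)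
  refine ⟨C, fun ξ η => ?_⟩
  have h := hC ξ η
  rw [coe_schwartzHat, neg_neg] at h
  rw [norm_mul, mul_comm, ← mul_assoc]
  exact mul_le_mul_of_nonneg_right h (norm_nonneg _)

lemma IsTestFunction.exists_sobolevWeight_mul_norm_mul_fourierHat_sub_le
    (hχ : IsTestFunction U χ) (ψ : R2 → ℂ) (r : ℝ) : ∃ S : 𝓢(R2, ℂ), ∀ ξ η,
      sobolevWeight r ξ * ‖ψ η * fourierHat χ (ξ - η)‖ ≤
        ‖sobolevWeight r η • ψ η‖ * ‖S (ξ - η)‖ := by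
  obtain ⟨T, hT⟩ := exists_schwartz_eq_sobolevWeight_smul |r| (schwartzHat hχ.toSchwartz)
  have hcoe : ⇑(schwartzHat hχ.toSchwartz) = fourierHat χ := coe_schwartzHat _
  refine ⟨(2 ^ |r| : ℝ) • T, fun ξ η => ?_⟩
  have hpos := sobolevWeight_pos (E := R2)
  rw [smul_apply, hT, hcoe, norm_smul, norm_smul, norm_smul, norm_mul,
    Real.norm_of_nonneg (hpos _ _).le, Real.norm_of_nonneg (hpos _ _).le,
    Real.norm_of_nonneg (Real.rpow_nonneg zero_le_two _)]
  calc sobolevWeight r ξ * (‖ψ η‖ * ‖fourierHat χ (ξ - η)‖)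
      ≤ 2 ^ |r| * sobolevWeight r η * sobolevWeight |r| (ξ - η) *
          (‖ψ η‖ * ‖fourierHat χ (ξ - η)‖) := by
        gcongr
        exact sobolevWeight_le_mul_sub r ξ η
    _ = _ := by ring

namespace MemHs

lemma aestronglyMeasurable_mul_fourierHat_sub (hψ : MemHs s ψ) (hχ : IsTestFunction U χ)
    (ξ : R2) : AEStronglyMeasurable (fun η => ψ η * fourierHat χ (ξ - η)) volume :=
  hψ.1.mul (hχ.continuous_fourierHat.comp (by fun_prop)).aestronglyMeasurable

lemma integrable_mul_fourierHat_sub (hψ : MemHs s ψ) (hχ : IsTestFunction U χ) (ξ : R2) :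
    Integrable fun η => ψ η * fourierHat χ (ξ - η) := by
  obtain ⟨C, hC⟩ := hχ.exists_norm_mul_fourierHat_sub_le ψ (s / 2 - 1)
  exact ((hψ.integrable_sobolevWeight_mul_norm (by linarith)).const_mul _).mono'
    (hψ.aestronglyMeasurable_mul_fourierHat_sub hχ ξ) (.of_forall (hC ξ))

theorem continuous_fourierCutoff (hψ : MemHs s ψ) (hχ : IsTestFunction U χ) :
    Continuous (fourierCutoff χ ψ) := by
  obtain ⟨C, hC⟩ := hχ.exists_norm_mul_fourierHat_sub_le ψ (s / 2 - 1)
  refine Continuous.mul (by fun_prop) (continuous_iff_continuousAt.2 fun ξ₀ => ?_)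
  have hbdd : ∀ᶠ ξ in 𝓝 ξ₀, C * sobolevWeight (-(s / 2 - 1)) ξ <
      C * sobolevWeight (-(s / 2 - 1)) ξ₀ + 1 :=
    (Continuous.continuousAt (by fun_prop)).eventually_lt_const (lt_add_one _)
  refine continuousAt_of_dominated
    (.of_forall (hψ.aestronglyMeasurable_mul_fourierHat_sub hχ))
    (hbdd.mono fun ξ hξ => .of_forall fun η => (hC ξ η).trans
      (mul_le_mul_of_nonneg_right hξ.le
        (mul_nonneg (sobolevWeight_pos _ η).le (norm_nonneg _))))
    ((hψ.integrable_sobolevWeight_mul_norm (by linarith)).const_mul _)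
    (.of_forall fun η => ?_)
  exact (continuous_const.mul
    (hχ.continuous_fourierHat.comp (continuous_sub_right η))).continuousAt

theorem integral_fourierCutoff_mul_testFT (hψ : MemHs s ψ) (hχ : IsTestFunction U χ)
    (hφ : IsTestFunction W φ) : ∫ ξ, fourierCutoff χ ψ ξ * testFT φ ξ =
      ∫ η, ψ η * testFT (fun x => χ x * φ x) η := by
  obtain ⟨C, hC⟩ := hχ.exists_norm_mul_fourierHat_sub_le ψ (s / 2 - 1)
  set t := s / 2 - 1
  have hint : Integrable (fun p : R2 × R2 => ψ p.2 * fourierHat χ (p.1 - p.2) * testFT φ p.1)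
      (volume.prod volume) := by
    obtain ⟨Φ, hΦ⟩ : ∃ Φ : 𝓢(R2, ℂ), ⇑Φ = testFT φ := ⟨_, coe_schwartzTestFT hφ.toSchwartz⟩
    have hleft := (((memHs_schwartz Φ (2 * -t + 2)).integrable_sobolevWeight_mul_norm
      (t := -t) (by linarith)).const_mul C)
    refine (hleft.mul_prod (hψ.integrable_sobolevWeight_mul_norm (t := t) (by grind))).mono' ?_
      (.of_forall fun p => ?_)
    · rw [← hΦ]
      exact (hψ.1.comp_snd.mul (hχ.continuous_fourierHat.comp
        (by fun_prop)).aestronglyMeasurable).mul (Φ.continuous.comp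
          continuous_fst).aestronglyMeasurable
    · calc _ ≤ _ := (norm_mul_le _ _).trans
            (mul_le_mul_of_nonneg_right (hC p.1 p.2) (norm_nonneg _))
        _ = _ := by rw [hΦ]; ring
  calc ∫ ξ, fourierCutoff χ ψ ξ * testFT φ ξ
      = ((2 * π) ^ 2 : ℂ)⁻¹ * ∫ ξ, ∫ η, ψ η * fourierHat χ (ξ - η) * testFT φ ξ := by
        simp only [fourierCutoff, mul_assoc, integral_const_mul, ← integral_mul_const]
    _ = ((2 * π) ^ 2 : ℂ)⁻¹ * ∫ η, ∫ ξ, ψ η * fourierHat χ (ξ - η) * testFT φ ξ := by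
        rw [integral_integral_swap hint]
    _ = ∫ η, ψ η * testFT (fun x => χ x * φ x) η := by
        rw [← integral_const_mul]
        congr 1 with η
        simp only [mul_assoc, integral_const_mul]
        rw [mul_left_comm, show ∫ ξ, fourierHat χ (ξ - η) * testFT φ ξ = _ from
          integral_fourierHat_sub_mul_testFT hχ.toSchwartz hφ.toSchwartz η,
          inv_mul_cancel_left₀ (by simp)]
        rfl

theorem cutoff (hψ : MemHs s ψ) (hχ : IsTestFunction U χ) :
    MemHs s (fourierCutoff χ ψ) := by
  obtain ⟨S, hS⟩ := hχ.exists_sobolevWeight_mul_norm_mul_fourierHat_sub_le ψ (s / 2)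
  have hψ' := memHs_iff_memLp.1 hψ
  refine memHs_iff_memLp.2 (memLp_two_of_norm_le_convolution (h := fun ξ => ‖S ξ‖)
    ((continuous_sobolevWeight _).smul (hψ.continuous_fourierCutoff hχ)).aestronglyMeasurable
    (hψ'.norm.const_mul ‖((2 * π) ^ 2 : ℂ)⁻¹‖) S.integrable.norm
    (fun ξ => norm_nonneg _) fun ξ => ?_)
  have hint := hψ.integrable_mul_fourierHat_sub hχ ξ
  have hint' : Integrable fun η => ‖sobolevWeight (s / 2) η • ψ η‖ * ‖S (ξ - η)‖ :=
    hψ'.norm.integrable_mul ((S.memLp 2).comp_measurePreserving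
      (Measure.measurePreserving_sub_left volume ξ)).norm
  calc ‖sobolevWeight (s / 2) ξ • fourierCutoff χ ψ ξ‖
      = ‖((2 * π) ^ 2 : ℂ)⁻¹‖ *
          (sobolevWeight (s / 2) ξ * ‖∫ η, ψ η * fourierHat χ (ξ - η)‖) := by
        rw [norm_smul, Real.norm_of_nonneg (sobolevWeight_pos _ _).le, fourierCutoff,
          norm_mul, mul_left_comm]
    _ ≤ ‖((2 * π) ^ 2 : ℂ)⁻¹‖ *
          (sobolevWeight (s / 2) ξ * ∫ η, ‖ψ η * fourierHat χ (ξ - η)‖) := by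
        have := sobolevWeight_pos (s / 2) ξ
        gcongr
        exact norm_integral_le_integral_norm _
    _ ≤ ‖((2 * π) ^ 2 : ℂ)⁻¹‖ * ∫ η, ‖sobolevWeight (s / 2) η • ψ η‖ * ‖S (ξ - η)‖ := by
        rw [← integral_const_mul (sobolevWeight (s / 2) ξ)]
        refine mul_le_mul_of_nonneg_left ?_ (norm_nonneg _)
        exact integral_mono (hint.norm.const_mul _) hint' (hS ξ)
    _ = _ := by simp only [mul_assoc, integral_const_mul]

end MemHs

theorem SupportedIn.cutoff (hsupp : SupportedIn K ψ) (hψ : MemHs s ψ)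
    (hχ : IsTestFunction U χ) : SupportedIn (K ∩ U) (fourierCutoff χ ψ) := fun φ hφ => by
  rw [hψ.integral_fourierCutoff_mul_testFT hχ hφ]
  exact hsupp _ ((hχ.mul hφ).mono fun x hx hxK => hx.2 ⟨hxK, hx.1⟩)

theorem SupportedIn.cutoff_ae_eq (hsupp : SupportedIn K ψ) (hψ : MemHs s ψ)
    (hχ : IsTestFunction U χ) (hW : IsOpen W) (hKW : K ⊆ W) (h1 : ∀ x ∈ W, χ x = 1) :
    fourierCutoff χ ψ =ᵐ[volume] ψ := by
  have hsub : MemHs s fun ξ => fourierCutoff χ ψ ξ - ψ ξ := (hψ.cutoff hχ).sub hψ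
  refine (hsub.ae_eq_zero fun φ hφ => ?_).mono fun ξ => sub_eq_zero.1
  have hχφ := hχ.mul hφ
  have htest : IsTestFunction Kᶜ fun x => χ x * φ x - φ x := by
    refine ⟨hχφ.contDiff.sub hφ.contDiff, hχφ.hasCompactSupport.sub hφ.hasCompactSupport,
      (closure_minimal (Function.support_subset_iff'.2 fun x hx => ?_) hW.isClosed_compl).trans
        (Set.compl_subset_compl.2 hKW)⟩
    rw [h1 x (not_not.1 hx), one_mul, sub_self]
  have hsubFT : ∀ ξ, testFT (fun x => χ x * φ x - φ x) ξ =
      testFT (fun x => χ x * φ x) ξ - testFT φ ξ := fun ξ => by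
    simp only [testFT, mul_sub]
    exact integral_sub (integrable_exp_I_mul_rdot_mul hχφ.toSchwartz.integrable ξ)
      (integrable_exp_I_mul_rdot_mul hφ.toSchwartz.integrable ξ)
  calc ∫ ξ, (fourierCutoff χ ψ ξ - ψ ξ) * testFT φ ξ
      = (∫ ξ, fourierCutoff χ ψ ξ * testFT φ ξ) - ∫ ξ, ψ ξ * testFT φ ξ := by
        simp only [sub_mul]
        exact integral_sub ((hψ.cutoff hχ).integrable_mul (hφ.memHs_testFT _))
          (hψ.integrable_mul (hφ.memHs_testFT _))
    _ = ∫ ξ, ψ ξ * testFT (fun x => χ x * φ x - φ x) ξ := by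
        rw [hψ.integral_fourierCutoff_mul_testFT hχ hφ]
        simp only [hsubFT, mul_sub]
        exact (integral_sub (hψ.integrable_mul (hχφ.memHs_testFT _))
          (hψ.integrable_mul (hφ.memHs_testFT _))).symm
    _ = 0 := hsupp _ htest

end Cutoff

section PartitionOfUnity

variable {ι : Type*} [Fintype ι] {s : ℝ} {U : ι → Set R2} {K W : Set R2} {χ : ι → R2 → ℂ}
  {ψ : R2 → ℂ}

lemma IsTestFunction.sum {V : Set R2} (hχ : ∀ i, IsTestFunction V (χ i)) :
    IsTestFunction V fun x => ∑ i, χ i x := by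
  refine ⟨ContDiff.sum fun i _ => (hχ i).contDiff, ?_, ?_⟩
  · simpa only [← Finset.sum_apply] using
      HasCompactSupport.finset_sum (s := Finset.univ) fun i _ => (hχ i).hasCompactSupport
  · refine (closure_minimal (fun x hx => ?_)
      (isClosed_iUnion_of_finite fun i => isClosed_tsupport (χ i))).trans
        (Set.iUnion_subset fun i => (hχ i).tsupport_subset)
    obtain ⟨i, -, hi⟩ := Finset.exists_ne_zero_of_sum_ne_zero hx
    exact Set.mem_iUnion.2 ⟨i, subset_tsupport _ hi⟩

open scoped Manifold in
/-- Summing to `1` on `K` alone would not suffice: a distribution supported in `K` may depend on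
derivatives transversal to `K`. -/
theorem exists_isTestFunction_sum_eq_one (hK : IsCompact K) (hU : ∀ i, IsOpen (U i))
    (hKU : K ⊆ ⋃ i, U i) : ∃ (χ : ι → R2 → ℂ) (W : Set R2), (∀ i, IsTestFunction (U i) (χ i)) ∧
      IsOpen W ∧ K ⊆ W ∧ ∀ x ∈ W, ∑ i, χ i x = 1 := by
  obtain ⟨R, hKR⟩ := hK.isBounded.subset_ball 0
  let V : ι → Set R2 := fun i => U i ∩ Metric.ball 0 R
  have hV : ∀ i, IsOpen (V i) := fun i => (hU i).inter Metric.isOpen_ball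
  have hKV : K ⊆ ⋃ i, V i := by
    rw [← Set.iUnion_inter]
    exact Set.subset_inter hKU hKR
  obtain ⟨δ, hδ, hδV⟩ := hK.exists_cthickening_subset_open (isOpen_iUnion hV) hKV
  obtain ⟨f, hf⟩ := SmoothPartitionOfUnity.exists_isSubordinate 𝓘(ℝ, R2)
    (Metric.isClosed_cthickening (δ := δ) (E := K)) V hV hδV
  have htsupport : ∀ i, tsupport (fun x => (f i x : ℂ)) ⊆ V i := fun i =>
    (closure_mono (Function.support_comp_subset ofReal_zero (f i))).trans (hf i)
  refine ⟨fun i x => (f i x : ℂ), Metric.thickening δ K, fun i => ⟨?_, ?_, ?_⟩,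
    Metric.isOpen_thickening, Metric.self_subset_thickening hδ K, fun x hx => ?_⟩
  · exact ofRealCLM.contDiff.comp (f i).contMDiff.contDiff
  · exact Metric.isCompact_of_isClosed_isBounded (isClosed_tsupport _)
      (Metric.isBounded_ball.subset ((htsupport i).trans Set.inter_subset_right))
  · exact (htsupport i).trans Set.inter_subset_left
  · rw [← ofReal_sum, ← finsum_eq_sum_of_fintype,
      f.sum_eq_one (Metric.thickening_subset_cthickening δ K hx), ofReal_one]

lemma fourierHat_sum (hχ : ∀ i, IsTestFunction (U i) (χ i)) (ξ : R2) :
    fourierHat (fun x => ∑ i, χ i x) ξ = ∑ i, fourierHat (χ i) ξ := by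
  simp only [fourierHat, testFT, Finset.mul_sum]
  exact integral_finsetSum _ fun i _ =>
    integrable_exp_I_mul_rdot_mul (hχ i).toSchwartz.integrable _

lemma MemHs.fourierCutoff_sum (hψ : MemHs s ψ) (hχ : ∀ i, IsTestFunction (U i) (χ i)) (ξ : R2) :
    fourierCutoff (fun x => ∑ i, χ i x) ψ ξ = ∑ i, fourierCutoff (χ i) ψ ξ := by
  simp only [fourierCutoff, fourierHat_sum hχ]
  rw [← Finset.mul_sum,
    ← integral_finsetSum _ fun i _ => hψ.integrable_mul_fourierHat_sub (hχ i) ξ]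
  simp only [Finset.mul_sum]

theorem SupportedIn.sum_fourierCutoff_ae_eq (hsupp : SupportedIn K ψ) (hψ : MemHs s ψ)
    (hχ : ∀ i, IsTestFunction (U i) (χ i)) (hW : IsOpen W) (hKW : K ⊆ W)
    (h1 : ∀ x ∈ W, ∑ i, χ i x = 1) :
    (fun ξ => ∑ i, fourierCutoff (χ i) ψ ξ) =ᵐ[volume] ψ := by
  simp only [← hψ.fourierCutoff_sum hχ]
  exact hsupp.cutoff_ae_eq hψ (IsTestFunction.sum fun i => (hχ i).mono (Set.subset_univ _))
    hW hKW h1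

end PartitionOfUnity

section Symbol

variable {k : ℝ} {ξ : R2} {ψ : R2 → ℂ}

/-- The modulus of the Fourier symbol `mT k` of the single-layer operator. On the null set
`‖ξ‖ = k`, where the symbol is singular, it takes the value `0`. -/
def symbolAbs (k : ℝ) (ξ : R2) : ℝ := (2 * √|k ^ 2 - ‖ξ‖ ^ 2|)⁻¹

/-- The phase of the Fourier symbol `mT k` of the single-layer operator. -/
def symbolPhase (k : ℝ) (ξ : R2) : ℂ := if ‖ξ‖ < k then I else 1

/-- The complex-valued square root of `symbolAbs`: the `L²` norm of `symbolSqrt k * ψ` is the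
energy norm of `ψ`. -/
def symbolSqrt (k : ℝ) (ξ : R2) : ℂ := √(symbolAbs k ξ)

lemma mT_eq_symbolPhase_mul_symbolAbs (hk : 0 ≤ k) (ξ : R2) :
    mT k ξ = symbolPhase k ξ * symbolAbs k ξ := by
  unfold mT symbolPhase symbolAbs rootk
  split_ifs with h
  · rw [abs_of_nonneg (sub_nonneg.2 (pow_le_pow_left₀ (norm_nonneg ξ) h.le 2))]
    push_cast
    rw [div_eq_mul_inv]
  · rw [abs_of_nonpos (sub_nonpos.2 (pow_le_pow_left₀ hk (not_lt.1 h) 2)), neg_sub]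
    push_cast
    rw [one_mul, mul_left_comm, ← div_div, div_self I_ne_zero, one_div]

lemma symbolAbs_nonneg (k : ℝ) (ξ : R2) : 0 ≤ symbolAbs k ξ := by unfold symbolAbs; positivity

lemma measurable_symbolAbs (k : ℝ) : Measurable (symbolAbs k) := by unfold symbolAbs; fun_prop

lemma measurable_symbolPhase (k : ℝ) : Measurable (symbolPhase k) :=
  Measurable.ite (measurableSet_lt (by fun_prop) (by fun_prop)) measurable_const measurable_const

lemma measurable_symbolSqrt (k : ℝ) : Measurable (symbolSqrt k) :=
  measurable_ofReal.comp (measurable_symbolAbs k).sqrt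

lemma norm_symbolPhase (k : ℝ) (ξ : R2) : ‖symbolPhase k ξ‖ = 1 := by
  unfold symbolPhase; split_ifs <;> simp

lemma one_sub_I_mul_symbolPhase_re (k : ℝ) (ξ : R2) : ((1 - I) * symbolPhase k ξ).re = 1 := by
  unfold symbolPhase; split_ifs <;> simp

lemma symbolSqrt_mul_self (k : ℝ) (ξ : R2) :
    symbolSqrt k ξ * symbolSqrt k ξ = symbolAbs k ξ := by
  rw [symbolSqrt, ← ofReal_mul, Real.mul_self_sqrt (symbolAbs_nonneg k ξ)]

lemma norm_symbolSqrt_sq (k : ℝ) (ξ : R2) : ‖symbolSqrt k ξ‖ ^ 2 = symbolAbs k ξ := by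
  rw [sq, ← norm_mul, symbolSqrt_mul_self, norm_real,
    Real.norm_of_nonneg (symbolAbs_nonneg k ξ)]

lemma conj_symbolSqrt (k : ℝ) (ξ : R2) : starRingEnd ℂ (symbolSqrt k ξ) = symbolSqrt k ξ :=
  conj_ofReal _

lemma ae_norm_ne (hk : 0 < k) : ∀ᵐ ξ : R2, ‖ξ‖ ≠ k := by
  have := Measure.addHaar_sphere_of_ne_zero (volume : Measure R2) 0 hk.ne'
  simpa [ae_iff, Metric.sphere, dist_zero_right] using this

lemma symbolAbs_pos (hk : 0 ≤ k) (h : ‖ξ‖ ≠ k) : 0 < symbolAbs k ξ := by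
  have : k ^ 2 - ‖ξ‖ ^ 2 ≠ 0 := by
    rw [Ne, sub_eq_zero, sq_eq_sq₀ hk (norm_nonneg ξ)]
    exact h.symm
  unfold symbolAbs
  positivity

lemma ae_symbolSqrt_ne_zero (hk : 0 < k) : ∀ᵐ ξ : R2, symbolSqrt k ξ ≠ 0 :=
  (ae_norm_ne hk).mono fun _ h => ofReal_ne_zero.2 (Real.sqrt_pos.2 (symbolAbs_pos hk.le h)).ne'

lemma symbolAbs_inv_le (hk : 0 ≤ k) (ξ : R2) :
    (symbolAbs k ξ)⁻¹ ≤ 2 * (1 + k) * sobolevWeight (1 / 2) ξ := by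
  rw [symbolAbs, inv_inv, mul_assoc]
  gcongr
  rw [sobolevWeight, ← Real.sqrt_eq_rpow, Real.sqrt_le_left (by positivity), mul_pow,
    Real.sq_sqrt (by positivity), abs_le]
  constructor <;> nlinarith [sq_nonneg ‖ξ‖, sq_nonneg k]

lemma one_le_mul_sobolevWeight_mul_symbolAbs (hk : 0 ≤ k) (h : ‖ξ‖ ≠ k) :
    1 ≤ 2 * (1 + k) * (sobolevWeight (1 / 2) ξ * symbolAbs k ξ) := by
  have := mul_le_mul_of_nonneg_right (symbolAbs_inv_le hk ξ) (symbolAbs_nonneg k ξ)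
  rwa [inv_mul_cancel₀ (symbolAbs_pos hk h).ne', mul_assoc] at this

lemma sobolevWeight_neg_half_le (hk : 0 ≤ k) (h : ‖ξ‖ ≠ k) :
    sobolevWeight (-(1 / 2)) ξ ≤ 2 * (1 + k) * symbolAbs k ξ :=
  calc sobolevWeight (-(1 / 2)) ξ
      ≤ sobolevWeight (-(1 / 2)) ξ *
          (2 * (1 + k) * (sobolevWeight (1 / 2) ξ * symbolAbs k ξ)) :=
        le_mul_of_one_le_right (sobolevWeight_pos _ ξ).le
          (one_le_mul_sobolevWeight_mul_symbolAbs hk h)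
    _ = sobolevWeight (-(1 / 2)) ξ * sobolevWeight (1 / 2) ξ *
          (2 * (1 + k) * symbolAbs k ξ) := by ring
    _ = 2 * (1 + k) * symbolAbs k ξ := by rw [sobolevWeight_neg_mul_self, one_mul]

lemma symbolAbs_le (hk : 0 < k) (h : 2 * k ≤ ‖ξ‖) :
    symbolAbs k ξ ≤ (1 + (2 * k)⁻¹) * sobolevWeight (-(1 / 2)) ξ := by
  have hξ : 0 < ‖ξ‖ := by linarith
  have hsqrt : ‖ξ‖ ≤ 2 * √|k ^ 2 - ‖ξ‖ ^ 2| := by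
    rw [← div_le_iff₀' two_pos]
    refine Real.le_sqrt_of_sq_le ?_
    rw [abs_of_nonpos (by nlinarith)]
    nlinarith
  have hone : 1 ≤ (2 * k)⁻¹ * ‖ξ‖ := by rwa [← div_eq_inv_mul, one_le_div (by positivity)]
  calc symbolAbs k ξ ≤ ‖ξ‖⁻¹ := inv_anti₀ hξ hsqrt
    _ ≤ (1 + (2 * k)⁻¹) * (√(1 + ‖ξ‖ ^ 2))⁻¹ := by
        rw [← div_eq_mul_inv, le_div_iff₀ (by positivity), inv_mul_le_iff₀ hξ]
        refine (Real.sqrt_le_left (by positivity)).2 ?_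
        nlinarith
    _ = _ := by
        rw [sobolevWeight, Real.rpow_neg (by positivity), ← Real.sqrt_eq_rpow]

lemma integrableOn_abs_sub_rpow (k : ℝ) :
    IntegrableOn (fun y : ℝ => |y - k| ^ (-(1 / 2) : ℝ)) (Set.Ioo 0 (2 * k)) := by
  have h0 : IntegrableOn (fun y : ℝ => |y| ^ (-(1 / 2) : ℝ)) (Metric.ball 0 k) :=
    integrableOn_ball_of_norm_le_rpow (C := 1) (α := 1 / 2) (by simp) (by norm_num)
      (.of_forall fun y => by
        rw [Real.norm_of_nonneg (by positivity), one_mul, Real.norm_eq_abs])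
      (continuous_abs.measurable.pow_const _).aestronglyMeasurable
  have := ((measurePreserving_sub_right volume k).integrableOn_comp_preimage
    (measurableEmbedding_subRight k)).2 h0
  refine this.mono_set fun y hy => ?_
  rw [Set.mem_preimage, mem_ball_zero_iff, Real.norm_eq_abs, abs_lt]
  constructor <;> linarith [hy.1, hy.2]

/-- Polar coordinates reduce the integrability of the singularity on the circle `‖ξ‖ = k` to that
of `|y - k|^(-1/2)` on the line. -/
theorem integrableOn_symbolAbs (hk : 0 < k) :
    IntegrableOn (symbolAbs k) (Metric.ball 0 (2 * k)) := by
  refine (integrableOn_fun_norm_addHaar (volume : Measure R2)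
    (f := fun r : ℝ => (2 * √|k ^ 2 - r ^ 2|)⁻¹) (r := 2 * k)).2 ?_
  refine ((integrableOn_abs_sub_rpow k).const_mul √k).mono' (by fun_prop) ?_
  refine (ae_restrict_iff' measurableSet_Ioo).2 (.of_forall fun y hy => ?_)
  have hy0 : 0 < y := hy.1
  have hfactor : |k ^ 2 - y ^ 2| = |y - k| * (y + k) := by
    rw [sq_sub_sq, abs_mul, abs_sub_comm k y, abs_of_pos (by linarith), add_comm k, mul_comm]
  have hle : y * (2 * √(y + k))⁻¹ ≤ √k := by
    have hsqrt : √k * √k ≤ √k * √(y + k) := by gcongr; linarith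
    rw [← div_eq_mul_inv, div_le_iff₀ (by positivity)]
    rw [Real.mul_self_sqrt hk.le] at hsqrt
    linarith [hy.2]
  calc _ = y * (2 * √(y + k))⁻¹ * (√|y - k|)⁻¹ := by
        rw [show Module.finrank ℝ R2 - 1 = 1 by simp, pow_one, smul_eq_mul,
          Real.norm_of_nonneg (by positivity), hfactor, Real.sqrt_mul (abs_nonneg _)]
        simp only [mul_inv]
        ring
    _ ≤ √k * |y - k| ^ (-(1 / 2) : ℝ) := by
        rw [Real.rpow_neg (abs_nonneg _), ← Real.sqrt_eq_rpow]
        gcongr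

theorem memLp_symbolSqrt_mul (hk : 0 < k) (hψ : MemHs (-(1 / 2)) ψ) (hc : Continuous ψ) :
    MemLp (fun ξ => symbolSqrt k ξ * ψ ξ) 2 := by
  obtain ⟨M, hM⟩ := (isCompact_closedBall (0 : R2) (2 * k)).exists_bound_of_continuousOn
    hc.continuousOn
  have hlow := (integrableOn_symbolAbs hk).mul_const (M ^ 2)
  rw [← IntegrableOn, ← integrable_indicator_iff Metric.isOpen_ball.measurableSet] at hlow
  have hhigh := (memHs_iff.1 hψ).2.const_mul (1 + (2 * k)⁻¹)
  have hmeas := (measurable_symbolSqrt k).aestronglyMeasurable.mul hψ.1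
  refine (memLp_two_iff_integrable_sq_norm hmeas).2
    ((hlow.add hhigh).mono' (hmeas.norm.pow 2) (.of_forall fun ξ => ?_))
  rw [Real.norm_of_nonneg (sq_nonneg _), Pi.mul_apply, norm_mul, mul_pow, norm_symbolSqrt_sq,
    Pi.add_apply, ← mul_assoc]
  have hweight := sobolevWeight_pos (-(1 / 2)) ξ
  have habs := symbolAbs_nonneg k ξ
  by_cases hξ : ξ ∈ Metric.ball (0 : R2) (2 * k)
  · rw [Set.indicator_of_mem hξ]
    refine le_add_of_le_of_nonneg ?_ (by positivity)
    gcongr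
    exact hM ξ (Metric.ball_subset_closedBall hξ)
  · rw [Set.indicator_of_notMem hξ, zero_add]
    gcongr
    exact symbolAbs_le hk (by simpa using hξ)

end Symbol

section LaxMilgram

variable {𝕜 H : Type*} [RCLike 𝕜] [NormedAddCommGroup H] [InnerProductSpace 𝕜 H] {c : ℝ≥0}

lemma norm_le_of_sq_norm_le_mul_norm_inner {u x : H} (h : ‖u‖ ^ 2 ≤ c * ‖inner 𝕜 u x‖) :
    ‖u‖ ≤ c * ‖x‖ := by
  rcases (norm_nonneg u).eq_or_lt with hu | hu
  · rw [← hu]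
    positivity
  · refine le_of_mul_le_mul_left ?_ hu
    calc ‖u‖ * ‖u‖ = ‖u‖ ^ 2 := (sq _).symm
      _ ≤ c * (‖u‖ * ‖x‖) := h.trans (by gcongr; exact norm_inner_le_norm u x)
      _ = ‖u‖ * (c * ‖x‖) := mul_left_comm _ _ _

/-- Lax–Milgram for sesquilinear forms; Mathlib's `IsCoercive` covers only real bilinear ones. -/
theorem exists_eq_of_sq_norm_le_mul_norm_inner [CompleteSpace H] (A : H →L[𝕜] H)
    (hA : ∀ u, ‖u‖ ^ 2 ≤ c * ‖inner 𝕜 u (A u)‖) (f : H) : ∃ u, A u = f := by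
  have hclosed : IsClosed (A.range : Set H) :=
    (A.antilipschitz_of_bound fun u => norm_le_of_sq_norm_le_mul_norm_inner (hA u)).isClosed_range
      A.uniformContinuous
  have : CompleteSpace A.range := hclosed.completeSpace_coe
  suffices A.range = ⊤ from LinearMap.range_eq_top.1 this f
  rw [← Submodule.orthogonal_eq_bot_iff, Submodule.eq_bot_iff]
  intro v hv
  have hzero : inner 𝕜 v (A v) = 0 :=
    Submodule.inner_left_of_mem_orthogonal (LinearMap.mem_range_self A.toLinearMap v) hv
  have := hA v
  rw [hzero, norm_zero, mul_zero] at this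
  exact norm_eq_zero.1 (pow_eq_zero_iff two_ne_zero |>.1 (this.antisymm (sq_nonneg _)))

theorem exists_mem_forall_inner_sub_eq_zero (V : Submodule 𝕜 H) [CompleteSpace V]
    (M : H →L[𝕜] H) (hM : ∀ u ∈ V, ‖u‖ ^ 2 ≤ c * ‖inner 𝕜 u (M u)‖) (f : H) :
    ∃ u ∈ V, ∀ v ∈ V, inner 𝕜 v (M u - f) = 0 := by
  obtain ⟨u, hu⟩ := exists_eq_of_sq_norm_le_mul_norm_inner
    (V.orthogonalProjectionOnto ∘L M ∘L V.subtypeL)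
    (fun u => by simpa using hM u u.2) (V.orthogonalProjectionOnto f)
  refine ⟨u, u.2, fun v hv => ?_⟩
  rw [← Submodule.inner_orthogonalProjectionOnto_eq_of_mem_left ⟨v, hv⟩, map_sub]
  simp only [ContinuousLinearMap.comp_apply, Submodule.subtypeL_apply] at hu
  rw [hu, sub_self, inner_zero_right]

lemma norm_le_of_forall_inner_sub_eq_zero {V : Submodule 𝕜 H} {M : H → H} {u f : H} (hu : u ∈ V)
    (hM : ‖u‖ ^ 2 ≤ c * ‖inner 𝕜 u (M u)‖) (h : ∀ v ∈ V, inner 𝕜 v (M u - f) = 0) :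
    ‖u‖ ≤ c * ‖f‖ := by
  have heq : inner 𝕜 u (M u) = inner 𝕜 u f := by
    rw [← sub_eq_zero, ← inner_sub_right]
    exact h u hu
  exact norm_le_of_sq_norm_le_mul_norm_inner (heq ▸ hM)

lemma eq_of_forall_inner_sub_eq_zero {V : Submodule 𝕜 H} {M : H →L[𝕜] H} {u u' f : H}
    (hu : u ∈ V) (hu' : u' ∈ V) (hM : ∀ u ∈ V, ‖u‖ ^ 2 ≤ c * ‖inner 𝕜 u (M u)‖)
    (h : ∀ v ∈ V, inner 𝕜 v (M u - f) = 0) (h' : ∀ v ∈ V, inner 𝕜 v (M u' - f) = 0) : u = u' := by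
  have hsub := V.sub_mem hu hu'
  have hnorm := norm_le_of_forall_inner_sub_eq_zero (f := 0) hsub (hM _ hsub) fun v hv => by
    rw [sub_zero, map_sub, ← sub_sub_sub_cancel_right _ _ f, inner_sub_right, h v hv, h' v hv,
      sub_zero]
  rw [norm_zero, mul_zero] at hnorm
  exact sub_eq_zero.1 (norm_le_zero_iff.1 hnorm)

end LaxMilgram

section EnergySpace

/-- The Hilbert space `L²(ℝ²)` of complex-valued functions. -/
abbrev L2Plane : Type := Lp ℂ 2 (volume : Measure R2)

variable {Γ : Set R2} {k : ℝ} {φ ψ F G : R2 → ℂ} {u v f g : L2Plane}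

lemma memLp_top_symbolPhase (k : ℝ) : MemLp (symbolPhase k) ⊤ (volume : Measure R2) :=
  memLp_top_of_bound (measurable_symbolPhase k).aestronglyMeasurable 1
    (.of_forall fun ξ => (norm_symbolPhase k ξ).le)

/-- Multiplication by the phase of the symbol, as an operator on `L²`. -/
def symbolPhaseMul (k : ℝ) : L2Plane →L[ℂ] L2Plane :=
  (ContinuousLinearMap.mul ℂ ℂ).holderL volume ⊤ 2 2
    ((memLp_top_symbolPhase k).toLp (symbolPhase k))

lemma coeFn_symbolPhaseMul (k : ℝ) (u : L2Plane) :
    symbolPhaseMul k u =ᵐ[volume] fun ξ => symbolPhase k ξ * u ξ := by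
  filter_upwards [(ContinuousLinearMap.mul ℂ ℂ).coeFn_holder (r := 2)
    ((memLp_top_symbolPhase k).toLp _) u, (memLp_top_symbolPhase k).coeFn_toLp] with ξ hmul hcoe
  rw [hcoe] at hmul
  exact hmul

lemma norm_sq_eq_integral_norm_sq {α E : Type*} [MeasurableSpace α] {μ : Measure α}
    [NormedAddCommGroup E] [InnerProductSpace ℝ E] (f : Lp E 2 μ) :
    ‖f‖ ^ 2 = ∫ x, ‖f x‖ ^ 2 ∂μ := by
  rw [← real_inner_self_eq_norm_sq, L2.inner_def]
  simp only [real_inner_self_eq_norm_sq]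

theorem re_one_sub_I_mul_inner_symbolPhaseMul (k : ℝ) (u : L2Plane) :
    ((1 - I) * inner ℂ u (symbolPhaseMul k u)).re = ‖u‖ ^ 2 := by
  have hint : Integrable (fun ξ => (1 - I) * inner ℂ (u ξ) (symbolPhaseMul k u ξ)) :=
    (L2.integrable_inner u (symbolPhaseMul k u)).const_mul (1 - I)
  calc ((1 - I) * inner ℂ u (symbolPhaseMul k u)).re
      = ∫ ξ, ((1 - I) * inner ℂ (u ξ) (symbolPhaseMul k u ξ)).re := by
        rw [L2.inner_def, ← integral_const_mul]
        exact (integral_re hint).symm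
    _ = ∫ ξ, ‖u ξ‖ ^ 2 := integral_congr_ae <| by
        filter_upwards [coeFn_symbolPhaseMul k u] with ξ hξ
        rw [hξ, RCLike.inner_apply, mul_assoc (symbolPhase k ξ), Complex.mul_conj, ← mul_assoc,
          re_mul_ofReal, one_sub_I_mul_symbolPhase_re, one_mul, normSq_eq_norm_sq]
    _ = ‖u‖ ^ 2 := (norm_sq_eq_integral_norm_sq u).symm

theorem sq_norm_le_mul_norm_inner_symbolPhaseMul (k : ℝ) (u : L2Plane) :
    ‖u‖ ^ 2 ≤ (2 : ℝ≥0) * ‖inner ℂ u (symbolPhaseMul k u)‖ := by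
  have hnorm : ‖(1 - I : ℂ)‖ ≤ 2 := (norm_sub_le _ _).trans (by norm_num)
  rw [← re_one_sub_I_mul_inner_symbolPhaseMul k u]
  exact (re_le_norm _).trans ((norm_mul_le _ _).trans
    (mul_le_mul_of_nonneg_right hnorm (norm_nonneg _)))

/-- The closure in `L²` of the functions `symbolSqrt k * φ̂` with `φ` a test function on `Γ`: the
Hilbert space on which the form `⟨Tψ, φ⟩` is coercive. -/
def energySpace (Γ : Set R2) (k : ℝ) : Submodule ℂ L2Plane :=
  (Submodule.span ℂ {v : L2Plane | ∃ φ, IsTestFunction Γ φ ∧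
    v =ᵐ[volume] fun ξ => symbolSqrt k ξ * fourierHat φ ξ}).topologicalClosure

lemma isClosed_energySpace (Γ : Set R2) (k : ℝ) :
    IsClosed (energySpace Γ k : Set L2Plane) :=
  Submodule.isClosed_topologicalClosure _

instance (Γ : Set R2) (k : ℝ) : CompleteSpace (energySpace Γ k) :=
  (isClosed_energySpace Γ k).completeSpace_coe

lemma IsTestFunction.mem_energySpace (hφ : IsTestFunction Γ φ)
    (hv : v =ᵐ[volume] fun ξ => symbolSqrt k ξ * fourierHat φ ξ) : v ∈ energySpace Γ k :=
  Submodule.le_topologicalClosure _ (Submodule.subset_span ⟨φ, hφ, hv⟩)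

lemma IsTestFunction.memLp_symbolSqrt_mul_fourierHat (hk : 0 < k) (hφ : IsTestFunction Γ φ) :
    MemLp (fun ξ => symbolSqrt k ξ * fourierHat φ ξ) 2 :=
  memLp_symbolSqrt_mul hk (hφ.memHs_fourierHat _) hφ.continuous_fourierHat

lemma inner_eq_integral_symbolSqrt_mul_testFT
    (hv : v =ᵐ[volume] fun ξ => symbolSqrt k ξ * fourierHat (fun x => starRingEnd ℂ (φ x)) ξ)
    (hg : g =ᵐ[volume] G) : inner ℂ v g = ∫ ξ, symbolSqrt k ξ * G ξ * testFT φ ξ := by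
  rw [L2.inner_def]
  refine integral_congr_ae ?_
  filter_upwards [hv, hg] with ξ hvξ hgξ
  rw [hvξ, hgξ, RCLike.inner_apply, map_mul, conj_symbolSqrt, fourierHat_conj,
    RingHomCompTriple.comp_apply, RingHom.id_apply]
  ring

theorem forall_mem_energySpace_inner_eq_zero_iff (hk : 0 < k) (hg : g =ᵐ[volume] G) :
    (∀ v ∈ energySpace Γ k, inner ℂ v g = 0) ↔
      ∀ φ, IsTestFunction Γ φ → ∫ ξ, symbolSqrt k ξ * G ξ * testFT φ ξ = 0 := by
  constructor
  · intro h φ hφ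
    have hmem := hφ.conj.memLp_symbolSqrt_mul_fourierHat hk
    rw [← inner_eq_integral_symbolSqrt_mul_testFT hmem.coeFn_toLp hg]
    exact h _ (hφ.conj.mem_energySpace hmem.coeFn_toLp)
  · intro h v hv
    rw [← Submodule.mem_orthogonal_singleton_iff_inner_left]
    refine Submodule.topologicalClosure_minimal _ (Submodule.span_le.2 ?_)
      (Submodule.isClosed_orthogonal _) hv
    rintro w ⟨φ, hφ, hw⟩
    rw [SetLike.mem_coe, Submodule.mem_orthogonal_singleton_iff_inner_left,
      inner_eq_integral_symbolSqrt_mul_testFT (φ := fun x => starRingEnd ℂ (φ x))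
        (by simpa only [Complex.conj_conj] using hw) hg]
    exact h _ hφ.conj

lemma mem_energySpace_of_forall_inner_eq_zero
    (h : ∀ g, (∀ v ∈ energySpace Γ k, inner ℂ v g = 0) → inner ℂ g u = 0) :
    u ∈ energySpace Γ k := by
  rw [← (energySpace Γ k).orthogonal_orthogonal, Submodule.mem_orthogonal]
  exact fun g hg => h g fun v hv => Submodule.inner_right_of_mem_orthogonal hv hg

/-- The weak form of `Tψ = F` on `Γ` is a Galerkin problem in the energy space. -/
theorem agreeOn_mT_mul_iff (hk : 0 < k) (hu : u =ᵐ[volume] fun ξ => symbolSqrt k ξ * ψ ξ)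
    (hf : f =ᵐ[volume] fun ξ => (symbolSqrt k ξ)⁻¹ * F ξ) :
    AgreeOn Γ (fun ξ => mT k ξ * ψ ξ) F ↔
      ∀ v ∈ energySpace Γ k, inner ℂ v (symbolPhaseMul k u - f) = 0 := by
  have hsub : ⇑(symbolPhaseMul k u - f) =ᵐ[volume] fun ξ =>
      symbolPhase k ξ * (symbolSqrt k ξ * ψ ξ) - (symbolSqrt k ξ)⁻¹ * F ξ := by
    filter_upwards [hu, hf, coeFn_symbolPhaseMul k u, Lp.coeFn_sub (symbolPhaseMul k u) f]
      with ξ hu hf hmul hsub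
    rw [hsub, Pi.sub_apply, hmul, hu, hf]
  have hint : ∀ φ, ∫ ξ, symbolSqrt k ξ * (symbolPhase k ξ * (symbolSqrt k ξ * ψ ξ) -
      (symbolSqrt k ξ)⁻¹ * F ξ) * testFT φ ξ = ∫ ξ, (mT k ξ * ψ ξ - F ξ) * testFT φ ξ :=
    fun φ => integral_congr_ae <| by
      filter_upwards [ae_symbolSqrt_ne_zero hk] with ξ hξ
      rw [mT_eq_symbolPhase_mul_symbolAbs hk.le, ← symbolSqrt_mul_self, mul_sub,
        mul_inv_cancel_left₀ hξ]
      ring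
  rw [forall_mem_energySpace_inner_eq_zero_iff hk hsub]
  simp only [hint]
  exact ⟨fun h φ hφ => h φ hφ.1 hφ.2 hφ.3, fun h φ h₁ h₂ h₃ => h φ ⟨h₁, h₂, h₃⟩⟩

lemma sq_norm_symbolSqrt_inv_mul_le (hk : 0 ≤ k) (F : R2 → ℂ) (ξ : R2) :
    ‖(symbolSqrt k ξ)⁻¹ * F ξ‖ ^ 2 ≤ 2 * (1 + k) * (sobolevWeight (1 / 2) ξ * ‖F ξ‖ ^ 2) := by
  rw [norm_mul, norm_inv, mul_pow, inv_pow, norm_symbolSqrt_sq, ← mul_assoc]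
  gcongr
  exact symbolAbs_inv_le hk ξ

lemma MemHs.memLp_symbolSqrt_inv_mul (hk : 0 ≤ k) (hF : MemHs (1 / 2) F) :
    MemLp (fun ξ => (symbolSqrt k ξ)⁻¹ * F ξ) 2 := by
  have hmeas : AEStronglyMeasurable (fun ξ => (symbolSqrt k ξ)⁻¹ * F ξ) volume :=
    (measurable_symbolSqrt k).inv.aestronglyMeasurable.mul hF.1
  refine (memLp_two_iff_integrable_sq_norm hmeas).2
    (((memHs_iff.1 hF).2.const_mul (2 * (1 + k))).mono' (hmeas.norm.pow 2) (.of_forall fun ξ => ?_))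
  rw [Real.norm_of_nonneg (sq_nonneg _)]
  exact sq_norm_symbolSqrt_inv_mul_le hk F ξ

end EnergySpace

section EnergySpaceElements

variable {Γ K : Set R2} {k : ℝ} {φ : R2 → ℂ} {u : L2Plane}

lemma IsTestFunction.supportedIn_fourierHat (hφ : IsTestFunction K φ) :
    SupportedIn K (fourierHat φ) := fun χ hχ => by
  have hparseval := integral_fourierHat_sub_mul_testFT hφ.toSchwartz hχ.toSchwartz 0
  simp only [sub_zero] at hparseval
  refine hparseval.trans ?_
  have hzero : ∀ x, φ x * χ x = 0 := fun x => by
    by_contra hne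
    exact hχ.tsupport_subset (subset_tsupport χ (right_ne_zero_of_mul hne))
      (hφ.tsupport_subset (subset_tsupport φ (left_ne_zero_of_mul hne)))
  exact mul_eq_zero_of_right _ (integral_eq_zero_of_ae
    (.of_forall fun x => mul_eq_zero_of_right _ (hzero x)))

theorem supportedIn_of_mem_energySpace (hk : 0 < k) (hu : u ∈ energySpace Γ k) :
    SupportedIn Γ fun ξ => (symbolSqrt k ξ)⁻¹ * u ξ := fun φ hφ => by
  have hg := (hφ.conj.memHs_fourierHat (1 / 2)).memLp_symbolSqrt_inv_mul hk.le
  have hperp : ∀ v ∈ energySpace Γ k, inner ℂ v (hg.toLp _) = 0 := by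
    refine (forall_mem_energySpace_inner_eq_zero_iff hk hg.coeFn_toLp).2 fun χ hχ => ?_
    rw [← hφ.conj.supportedIn_fourierHat χ (by rwa [compl_compl])]
    refine integral_congr_ae ?_
    filter_upwards [ae_symbolSqrt_ne_zero hk] with ξ hξ
    rw [mul_inv_cancel_left₀ hξ]
  rw [← inner_eq_zero_symm.1 (hperp u hu), L2.inner_def]
  refine integral_congr_ae ?_
  filter_upwards [hg.coeFn_toLp] with ξ hξ
  rw [hξ, RCLike.inner_apply, map_mul, map_inv₀, conj_symbolSqrt, fourierHat_conj,
    Complex.conj_conj]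
  ring

lemma integrable_sq_norm_Lp (u : L2Plane) : Integrable fun ξ => ‖u ξ‖ ^ 2 :=
  (memLp_two_iff_integrable_sq_norm (Lp.aestronglyMeasurable u)).1 (Lp.memLp u)

lemma ae_sobolevWeight_mul_sq_norm_le (hk : 0 < k) (ψ : R2 → ℂ) :
    ∀ᵐ ξ, sobolevWeight (-(1 / 2)) ξ * ‖ψ ξ‖ ^ 2 ≤
      2 * (1 + k) * ‖symbolSqrt k ξ * ψ ξ‖ ^ 2 := by
  filter_upwards [ae_norm_ne hk] with ξ hξ
  rw [norm_mul, mul_pow, norm_symbolSqrt_sq, ← mul_assoc]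
  gcongr
  exact sobolevWeight_neg_half_le hk.le hξ

lemma memHs_symbolSqrt_inv_mul (hk : 0 < k) (u : L2Plane) :
    MemHs (-(1 / 2)) fun ξ => (symbolSqrt k ξ)⁻¹ * u ξ := by
  have hmeas : AEStronglyMeasurable (fun ξ => (symbolSqrt k ξ)⁻¹ * u ξ) volume :=
    (measurable_symbolSqrt k).inv.aestronglyMeasurable.mul (Lp.aestronglyMeasurable u)
  refine memHs_iff.2 ⟨hmeas, Integrable.mono'
    ((integrable_sq_norm_Lp u).const_mul (2 * (1 + k)))
    ((continuous_sobolevWeight _).aestronglyMeasurable.mul (hmeas.norm.pow 2)) ?_⟩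
  filter_upwards [ae_sobolevWeight_mul_sq_norm_le hk fun ξ => (symbolSqrt k ξ)⁻¹ * u ξ,
    ae_symbolSqrt_ne_zero hk] with ξ hle hξ
  rw [mul_inv_cancel_left₀ hξ] at hle
  rwa [Real.norm_of_nonneg (mul_nonneg (sobolevWeight_pos _ ξ).le (sq_nonneg _))]

/-- Cutting off by a function equal to `1` near `Γ` selects the continuous representative of the
Fourier transform. -/
theorem exists_hTildeElt_of_mem_energySpace (hΓ : Bornology.IsBounded Γ) (hk : 0 < k)
    (hu : u ∈ energySpace Γ k) : ∃ ψ : HTildeElt (-(1 / 2)) Γ,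
      u =ᵐ[volume] fun ξ => symbolSqrt k ξ * ψ.ft ξ := by
  have hmem := memHs_symbolSqrt_inv_mul hk u
  have hsupp := supportedIn_of_mem_energySpace hk hu
  obtain ⟨χ, W, hχ, hW, hΓW, h1⟩ := exists_isTestFunction_sum_eq_one (ι := Unit)
    hΓ.isCompact_closure (fun _ => isOpen_univ) (Set.subset_iUnion_of_subset () (Set.subset_univ _))
  simp only [Fintype.sum_unique] at h1
  have hcut := hsupp.cutoff_ae_eq hmem (hχ ()) hW (subset_closure.trans hΓW) h1
  refine ⟨⟨_, hmem.continuous_fourierCutoff (hχ ()), (hmem.cutoff (hχ ())).2,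
    fun φ h₁ h₂ h₃ => ?_⟩, ?_⟩
  · refine hsupp.cutoff hmem (hχ ()) φ ⟨h₁, h₂, fun x hx hxΓ => ?_⟩
    exact (Set.disjoint_iff_inter_eq_empty.2 h₃).notMem_of_mem_left hx (subset_closure hxΓ.1)
  · filter_upwards [hcut, ae_symbolSqrt_ne_zero hk] with ξ hcut hξ
    rw [hcut, mul_inv_cancel_left₀ hξ]

end EnergySpaceElements

section SegmentProperty

/-- The segment property: near each of its boundary points, the closure of `Γ` is moved into `Γ` by
arbitrarily short translations in a fixed direction. -/
def HasSegmentProperty {E : Type*} [NormedAddCommGroup E] [NormedSpace ℝ E] (Γ : Set E) : Prop :=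
  ∀ x ∈ frontier Γ, ∃ U ∈ 𝓝 x, ∃ v : E, ∀ y ∈ closure Γ ∩ U, ∀ t ∈ Set.Ioo (0 : ℝ) 1,
    y + t • v ∈ Γ

lemma HasSegmentProperty.exists_isOpen {E : Type*} [NormedAddCommGroup E] [NormedSpace ℝ E]
    {Γ : Set E} (h : HasSegmentProperty Γ) (hΓ : IsOpen Γ) {x : E} (hx : x ∈ closure Γ) :
    ∃ (U : Set E) (v : E), IsOpen U ∧ x ∈ U ∧
      ∀ y ∈ closure Γ ∩ U, ∀ t ∈ Set.Ioo (0 : ℝ) 1, y + t • v ∈ Γ := by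
  by_cases hxΓ : x ∈ Γ
  · refine ⟨Γ, 0, hΓ, hxΓ, fun y hy t _ => ?_⟩
    rw [smul_zero, add_zero]
    exact hy.2
  · obtain ⟨U, hU, v, hv⟩ := h x (by rw [hΓ.frontier_eq]; exact ⟨hx, hxΓ⟩)
    exact ⟨interior U, v, isOpen_interior, mem_interior_iff_mem_nhds.2 hU,
      fun y hy => hv y ⟨hy.1, interior_subset hy.2⟩⟩

lemma le_of_mem_closure_of_forall_lt {X : Type*} [TopologicalSpace X] {Γ U : Set X} {f g : X → ℝ}
    (hf : Continuous f) (hg : Continuous g) (hU : IsOpen U)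
    (hfg : ∀ y ∈ U ∩ Γ, f y < g y) {y : X} (hyU : y ∈ U) (hy : y ∈ closure Γ) : f y ≤ g y :=
  closure_minimal (fun z hz => (hfg z hz).le) (isClosed_le hf hg) (hU.inter_closure ⟨hyU, hy⟩)

/-- The domain lies above a graph near a boundary point, so it suffices to move upwards. -/
theorem IsLipschitzDomain.hasSegmentProperty {Γ : Set R2} (hΓ : IsLipschitzDomain Γ) :
    HasSegmentProperty Γ := fun x hx => by
  obtain ⟨e, L, f, U, hL, hU, hxU, hgraph⟩ := hΓ.2.2.2 x hx
  have hf := hL.continuous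
  have he := e.continuous
  obtain ⟨r, hr, hrU⟩ := Metric.isOpen_iff.1 hU x hxU
  set up : R2 := e.symm (EuclideanSpace.single 1 1) with hup
  have hup_norm : ‖up‖ = 1 := by simp [hup]
  refine ⟨Metric.ball x (r / 2), Metric.ball_mem_nhds x (half_pos hr), (r / 2) • up, ?_⟩
  rintro y ⟨hyΓ, hyx⟩ t ⟨ht0, ht1⟩
  have hyU : y ∈ U := hrU (Metric.ball_subset_ball (half_le_self hr.le) hyx)
  have hle : f (e y 0) ≤ e y 1 :=
    le_of_mem_closure_of_forall_lt (f := fun z => f (e z 0)) (g := fun z => e z 1)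
      (by fun_prop) (by fun_prop) hU (fun z hz => (hgraph z hz.1).1 hz.2) hyU hyΓ
  have hmem : y + t • (r / 2) • up ∈ U := hrU <| by
    have hshift : dist (y + t • (r / 2) • up) y < r / 2 := by
      rw [dist_self_add_left, norm_smul, norm_smul, hup_norm, mul_one,
        Real.norm_of_nonneg ht0.le, Real.norm_of_nonneg (half_pos hr).le]
      exact mul_lt_of_lt_one_left (half_pos hr) ht1
    exact (dist_triangle _ y _).trans_lt ((add_lt_add hshift hyx).trans_eq (add_halves r))
  rw [hgraph _ hmem]
  have hcoord0 : e (y + t • (r / 2) • up) 0 = e y 0 := by simp [hup]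
  have hcoord1 : e (y + t • (r / 2) • up) 1 = e y 1 + t * (r / 2) := by simp [hup]
  rw [hcoord0, hcoord1]
  linarith [mul_pos ht0 (half_pos hr)]

end SegmentProperty

section Density

variable {Γ K : Set R2} {k s : ℝ} {ψ : R2 → ℂ} {u : L2Plane}

lemma tendsto_integral_mul_of_tendsto_one {α 𝕜 : Type*} [MeasurableSpace α] {μ : Measure α}
    [RCLike 𝕜] {f : α → 𝕜} {m : ℕ → α → 𝕜} (hf : Integrable f μ)
    (hm : ∀ n, AEStronglyMeasurable (m n) μ) (hm1 : ∀ n x, ‖m n x‖ ≤ 1)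
    (hlim : ∀ x, Tendsto (m · x) atTop (𝓝 1)) :
    Tendsto (fun n => ∫ x, f x * m n x ∂μ) atTop (𝓝 (∫ x, f x ∂μ)) := by
  refine tendsto_integral_of_dominated_convergence (fun x => ‖f x‖) (fun n => hf.1.mul (hm n))
    hf.norm (fun n => .of_forall fun x => ?_) (.of_forall fun x => ?_)
  · rw [norm_mul]
    exact mul_le_of_le_one_right (norm_nonneg _) (hm1 n x)
  · simpa only [mul_one] using (hlim x).const_mul (f x)

/-- Mollifying with a bump centred at `a` moves the support from `K` to the vicinity of `K + a`. -/
theorem MemHs.exists_isTestFunction_fourierHat_eq_mul_of_add_mem (hψ : MemHs s ψ)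
    (hc : Continuous ψ) (hsupp : SupportedIn K ψ) (hK : IsCompact K) (hΓ : IsOpen Γ) {a : R2}
    (ha : ∀ y ∈ K, y + a ∈ Γ) {δ : ℝ} (hδ : 0 < δ) :
    ∃ m : R2 → ℂ, Continuous m ∧ (∀ ξ, ‖m ξ‖ ≤ 1) ∧ (∀ ξ, ‖m ξ - 1‖ ≤ (‖a‖ + δ) * ‖ξ‖) ∧
      ∃ φ, IsTestFunction Γ φ ∧ ∀ ξ, fourierHat φ ξ = ψ ξ * m ξ := by
  obtain ⟨ε, hε, hεΓ⟩ := (hK.image (continuous_add_const a)).exists_cthickening_subset_open hΓ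
    (Set.image_subset_iff.2 ha)
  obtain ⟨η, hη, hη1, hη_sub⟩ :=
    exists_isTestFunction_norm_fourierHat_sub_one_le a (lt_min hε hδ)
  obtain ⟨φ, hφ, hφ_eq⟩ := hψ.exists_isTestFunction_fourierHat_eq hc hsupp hK hη
  refine ⟨fourierHat η, hη.continuous_fourierHat, hη1, fun ξ => (hη_sub ξ).trans ?_, φ,
    hφ.mono ?_, hφ_eq⟩
  · gcongr
    exact min_le_right ε δ
  · rintro _ ⟨y, hy, z, hz, rfl⟩
    refine hεΓ (Metric.mem_cthickening_of_dist_le _ (y + a) _ _ ⟨y, hy, rfl⟩ ?_)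
    rw [dist_add_left]
    exact (Metric.mem_closedBall.1 hz).trans (min_le_left ε δ)

lemma MemHs.exists_seq_isTestFunction (hψ : MemHs s ψ) (hc : Continuous ψ)
    (hsupp : SupportedIn K ψ) (hK : IsCompact K) (hΓ : IsOpen Γ) {v : R2}
    (hv : ∀ y ∈ K, ∀ t ∈ Set.Ioo (0 : ℝ) 1, y + t • v ∈ Γ) :
    ∃ m : ℕ → R2 → ℂ, (∀ n, Continuous (m n)) ∧ (∀ n ξ, ‖m n ξ‖ ≤ 1) ∧
      (∀ ξ, Tendsto (m · ξ) atTop (𝓝 1)) ∧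
      ∀ n, ∃ φ, IsTestFunction Γ φ ∧ ∀ ξ, fourierHat φ ξ = ψ ξ * m n ξ := by
  obtain ⟨t, -, ht, ht_lim⟩ := exists_seq_strictAnti_tendsto' (zero_lt_one' ℝ)
  choose m hm hm1 hm_sub hφ using fun n =>
    hψ.exists_isTestFunction_fourierHat_eq_mul_of_add_mem hc hsupp hK hΓ
      (fun y hy => hv y hy (t n) (ht n)) (ht n).1
  refine ⟨m, hm, hm1, fun ξ => ?_, hφ⟩
  rw [tendsto_iff_norm_sub_tendsto_zero]
  refine squeeze_zero (fun n => norm_nonneg _) (fun n => hm_sub n ξ) ?_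
  simpa using ((ht_lim.smul_const v).norm.add ht_lim).mul_const ‖ξ‖

theorem mem_energySpace_of_forall_add_smul_mem (hk : 0 < k) (hψ : MemHs s ψ) (hc : Continuous ψ)
    (hsupp : SupportedIn K ψ) (hK : IsCompact K) (hΓ : IsOpen Γ) {v : R2}
    (hv : ∀ y ∈ K, ∀ t ∈ Set.Ioo (0 : ℝ) 1, y + t • v ∈ Γ)
    (hu : u =ᵐ[volume] fun ξ => symbolSqrt k ξ * ψ ξ) : u ∈ energySpace Γ k := by
  obtain ⟨m, hm, hm1, hm_lim, hφ⟩ := hψ.exists_seq_isTestFunction hc hsupp hK hΓ hv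
  refine mem_energySpace_of_forall_inner_eq_zero fun g hg => ?_
  have hzero : ∀ n, ∫ ξ, inner ℂ (g ξ) (u ξ) * m n ξ = 0 := fun n => by
    obtain ⟨φ, hφ, hφ_eq⟩ := hφ n
    have hw := (hφ.memLp_symbolSqrt_mul_fourierHat hk).coeFn_toLp
    rw [← inner_eq_zero_symm.1 (hg _ (hφ.mem_energySpace hw)), L2.inner_def]
    refine integral_congr_ae ?_
    filter_upwards [hu, hw] with ξ hu hw
    rw [hu, hw, hφ_eq, RCLike.inner_apply, RCLike.inner_apply]
    ring
  have hlim := tendsto_integral_mul_of_tendsto_one (L2.integrable_inner (𝕜 := ℂ) g u)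
    (fun n => (hm n).aestronglyMeasurable) hm1 hm_lim
  simp only [hzero] at hlim
  rw [L2.inner_def]
  exact tendsto_nhds_unique hlim tendsto_const_nhds

lemma HTildeElt.memHs (ψ : HTildeElt s Γ) : MemHs s ψ.ft :=
  ⟨ψ.cont.aestronglyMeasurable, ψ.mem⟩

lemma HTildeElt.supportedIn (ψ : HTildeElt s Γ) : SupportedIn (closure Γ) ψ.ft := fun φ hφ =>
  ψ.supp φ hφ.contDiff hφ.hasCompactSupport
    (Set.disjoint_iff_inter_eq_empty.1 (Set.subset_compl_iff_disjoint_right.1 hφ.tsupport_subset))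

theorem HTildeElt.mem_energySpace (hΓ : IsOpen Γ) (hb : Bornology.IsBounded Γ)
    (hseg : HasSegmentProperty Γ) (hk : 0 < k) (ψ : HTildeElt (-(1 / 2)) Γ)
    (hu : u =ᵐ[volume] fun ξ => symbolSqrt k ξ * ψ.ft ξ) : u ∈ energySpace Γ k := by
  have hK := hb.isCompact_closure
  choose U v hU hxU hv using fun x : closure Γ => hseg.exists_isOpen hΓ x.2
  obtain ⟨t, ht⟩ := hK.elim_finite_subcover U hU
    fun x hx => Set.mem_iUnion.2 ⟨⟨x, hx⟩, hxU ⟨x, hx⟩⟩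
  rw [← Finset.set_biUnion_coe, Set.biUnion_eq_iUnion] at ht
  obtain ⟨χ, W, hχ, hW, hKW, h1⟩ := exists_isTestFunction_sum_eq_one hK (fun i : t => hU i) ht
  have hL : ∀ i, MemLp (fun ξ => symbolSqrt k ξ * fourierCutoff (χ i) ψ.ft ξ) 2 := fun i =>
    memLp_symbolSqrt_mul hk (ψ.memHs.cutoff (hχ i)) (ψ.memHs.continuous_fourierCutoff (hχ i))
  have hmem : ∀ i, (hL i).toLp _ ∈ energySpace Γ k := fun i => by
    have hχ' : IsTestFunction (tsupport (χ i)) (χ i) :=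
      ⟨(hχ i).contDiff, (hχ i).hasCompactSupport, subset_rfl⟩
    exact mem_energySpace_of_forall_add_smul_mem hk (ψ.memHs.cutoff hχ')
      (ψ.memHs.continuous_fourierCutoff hχ') (ψ.supportedIn.cutoff ψ.memHs hχ')
      (hK.inter_right (isClosed_tsupport _)) hΓ
      (fun y hy => hv i y ⟨hy.1, (hχ i).tsupport_subset hy.2⟩) (hL i).coeFn_toLp
  have hsum : u = ∑ i, (hL i).toLp _ := by
    apply Lp.ext
    filter_upwards [hu, ψ.supportedIn.sum_fourierCutoff_ae_eq ψ.memHs hχ hW hKW h1,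
      Lp.coeFn_fun_finsetSum Finset.univ fun i => (hL i).toLp _,
      ae_all_iff.2 fun i => (hL i).coeFn_toLp] with ξ hu hcut hcoe hL
    simp only [hu, hcoe, hL, ← Finset.mul_sum, hcut]
  rw [hsum]
  exact Submodule.sum_mem _ fun i _ => hmem i

end Density

section SingleLayerEquation

variable {Γ : Set R2} {k s : ℝ} {ψ F : R2 → ℂ} {u f : L2Plane}

lemma MemHs.wnormSq_le_mul_sq_norm (hk : 0 < k) (hψ : MemHs (-(1 / 2)) ψ)
    (hu : u =ᵐ[volume] fun ξ => symbolSqrt k ξ * ψ ξ) :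
    wnormSq (-(1 / 2)) ψ ≤ 2 * (1 + k) * (((2 * π) ^ 2)⁻¹ * ‖u‖ ^ 2) := by
  rw [wnormSq, mul_left_comm, norm_sq_eq_integral_norm_sq,
    ← integral_const_mul (2 * (1 + k))]
  refine mul_le_mul_of_nonneg_left (integral_mono_ae hψ.2
    ((integrable_sq_norm_Lp u).const_mul _) ?_) (by positivity)
  filter_upwards [hu, ae_sobolevWeight_mul_sq_norm_le hk ψ] with ξ hu hle
  rwa [hu]

lemma MemHs.mul_sq_norm_le_wnormSq (hk : 0 ≤ k) (hF : MemHs (1 / 2) F)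
    (hf : f =ᵐ[volume] fun ξ => (symbolSqrt k ξ)⁻¹ * F ξ) :
    ((2 * π) ^ 2)⁻¹ * ‖f‖ ^ 2 ≤ 2 * (1 + k) * wnormSq (1 / 2) F := by
  rw [wnormSq, mul_left_comm (2 * (1 + k)), norm_sq_eq_integral_norm_sq,
    ← integral_const_mul (2 * (1 + k))]
  refine mul_le_mul_of_nonneg_left (integral_mono_ae (integrable_sq_norm_Lp f)
    (hF.2.const_mul _) ?_) (by positivity)
  filter_upwards [hf] with ξ hf
  rw [hf]
  exact sq_norm_symbolSqrt_inv_mul_le hk F ξ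

lemma HTildeElt.ft_injective : Function.Injective (HTildeElt.ft : HTildeElt s Γ → R2 → ℂ) := by
  rintro ⟨⟩ ⟨⟩ rfl
  rfl

lemma HTildeElt.memLp_symbolSqrt_mul (hk : 0 < k) (ψ : HTildeElt (-(1 / 2)) Γ) :
    MemLp (fun ξ => symbolSqrt k ξ * ψ.ft ξ) 2 :=
  _root_.memLp_symbolSqrt_mul hk ψ.memHs ψ.cont

theorem exists_agreeOn_mT_mul (hb : Bornology.IsBounded Γ) (hk : 0 < k) (hF : MemHs (1 / 2) F) :
    ∃ ψ : HTildeElt (-(1 / 2)) Γ, AgreeOn Γ (fun ξ => mT k ξ * ψ.ft ξ) F := by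
  have hf := hF.memLp_symbolSqrt_inv_mul hk.le
  obtain ⟨u, hu, hsol⟩ := exists_mem_forall_inner_sub_eq_zero (energySpace Γ k) (symbolPhaseMul k)
    (fun u _ => sq_norm_le_mul_norm_inner_symbolPhaseMul k u) (hf.toLp _)
  obtain ⟨ψ, hψ⟩ := exists_hTildeElt_of_mem_energySpace hb hk hu
  exact ⟨ψ, (agreeOn_mT_mul_iff hk hψ hf.coeFn_toLp).2 hsol⟩

theorem HTildeElt.eq_of_agreeOn_mT_mul (hΓ : IsOpen Γ) (hb : Bornology.IsBounded Γ)
    (hseg : HasSegmentProperty Γ) (hk : 0 < k) (hF : MemHs (1 / 2) F)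
    {ψ ψ' : HTildeElt (-(1 / 2)) Γ} (h : AgreeOn Γ (fun ξ => mT k ξ * ψ.ft ξ) F)
    (h' : AgreeOn Γ (fun ξ => mT k ξ * ψ'.ft ξ) F) : ψ = ψ' := by
  have hf := (hF.memLp_symbolSqrt_inv_mul hk.le).coeFn_toLp
  have hu := (ψ.memLp_symbolSqrt_mul hk).coeFn_toLp
  have hu' := (ψ'.memLp_symbolSqrt_mul hk).coeFn_toLp
  have heq := eq_of_forall_inner_sub_eq_zero (ψ.mem_energySpace hΓ hb hseg hk hu)
    (ψ'.mem_energySpace hΓ hb hseg hk hu')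
    (fun u _ => sq_norm_le_mul_norm_inner_symbolPhaseMul k u)
    ((agreeOn_mT_mul_iff hk hu hf).1 h) ((agreeOn_mT_mul_iff hk hu' hf).1 h')
  refine HTildeElt.ft_injective ((Continuous.ae_eq_iff_eq volume ψ.cont ψ'.cont).1 ?_)
  filter_upwards [hu, heq ▸ hu', ae_symbolSqrt_ne_zero hk] with ξ hu hu' hξ
  exact mul_left_cancel₀ hξ (hu.symm.trans hu')

theorem HTildeElt.wnorm_le_of_agreeOn_mT_mul (hΓ : IsOpen Γ) (hb : Bornology.IsBounded Γ)
    (hseg : HasSegmentProperty Γ) (hk : 0 < k) (hF : MemHs (1 / 2) F)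
    {ψ : HTildeElt (-(1 / 2)) Γ} (h : AgreeOn Γ (fun ξ => mT k ξ * ψ.ft ξ) F) :
    wnorm (-(1 / 2)) ψ.ft ≤ 4 * (1 + k) * wnorm (1 / 2) F := by
  have hf := (hF.memLp_symbolSqrt_inv_mul hk.le).coeFn_toLp
  have hu := (ψ.memLp_symbolSqrt_mul hk).coeFn_toLp
  set f := (hF.memLp_symbolSqrt_inv_mul hk.le).toLp _
  set u := (ψ.memLp_symbolSqrt_mul hk).toLp _
  have hle : ‖u‖ ≤ (2 : ℝ≥0) * ‖f‖ :=
    norm_le_of_forall_inner_sub_eq_zero (ψ.mem_energySpace hΓ hb hseg hk hu)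
      (sq_norm_le_mul_norm_inner_symbolPhaseMul k u) ((agreeOn_mT_mul_iff hk hu hf).1 h)
  have hwnormSq : wnormSq (-(1 / 2)) ψ.ft ≤ (4 * (1 + k)) ^ 2 * wnormSq (1 / 2) F := by
    calc wnormSq (-(1 / 2)) ψ.ft
        ≤ 2 * (1 + k) * (((2 * π) ^ 2)⁻¹ * ‖u‖ ^ 2) := ψ.memHs.wnormSq_le_mul_sq_norm hk hu
      _ ≤ 2 * (1 + k) * (((2 * π) ^ 2)⁻¹ * ((2 : ℝ≥0) * ‖f‖) ^ 2) := by gcongr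
      _ = 8 * (1 + k) * (((2 * π) ^ 2)⁻¹ * ‖f‖ ^ 2) := by push_cast; ring
      _ ≤ 8 * (1 + k) * (2 * (1 + k) * wnormSq (1 / 2) F) :=
        mul_le_mul_of_nonneg_left (hF.mul_sq_norm_le_wnormSq hk.le hf) (by positivity)
      _ = (4 * (1 + k)) ^ 2 * wnormSq (1 / 2) F := by ring
  calc wnorm (-(1 / 2)) ψ.ft
      ≤ √((4 * (1 + k)) ^ 2 * wnormSq (1 / 2) F) := Real.sqrt_le_sqrt hwnormSq
    _ = 4 * (1 + k) * wnorm (1 / 2) F := by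
      rw [Real.sqrt_mul (sq_nonneg _), Real.sqrt_sq (by positivity), wnorm]

theorem statement18_general (hΓ : IsOpen Γ) (hb : Bornology.IsBounded Γ)
    (hseg : HasSegmentProperty Γ) (hk : 0 < k) (hF : MemHs (1 / 2) F) :
    (∃! ψ : HTildeElt (-(1 / 2)) Γ, AgreeOn Γ (fun ξ => mT k ξ * ψ.ft ξ) F) ∧
      ∀ ψ : HTildeElt (-(1 / 2)) Γ, AgreeOn Γ (fun ξ => mT k ξ * ψ.ft ξ) F →
        wnorm (-(1 / 2)) ψ.ft ≤ 4 * (1 + k) * wnorm (1 / 2) F :=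
  ⟨existsUnique_of_exists_of_unique (exists_agreeOn_mT_mul hb hk hF)
      fun _ _ => HTildeElt.eq_of_agreeOn_mT_mul hΓ hb hseg hk hF,
    fun _ => HTildeElt.wnorm_le_of_agreeOn_mT_mul hΓ hb hseg hk hF⟩

end SingleLayerEquation

/-- Proposition A.3: the Helmholtz single-layer operator
`T : H̃^{-1/2}(Γ) → H^{1/2}(Γ)` is bijective with a bounded inverse: for every
`f ∈ H^{1/2}(Γ)` (represented by the Fourier data `F` of any `H^{1/2}(ℝ²)` extension)
the equation `Tψ = f` on `Γ` has a unique solution `ψ ∈ H̃^{-1/2}(Γ)`, and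
`‖ψ‖_{H^{-1/2}(ℝ²)} ≤ C ‖f‖_{H^{1/2}(Γ)}` with `C` independent of `f`. -/
theorem statement18 (Γ : Set R2) (hΓ : IsLipschitzDomain Γ) (k : ℝ) (hk : 0 < k) :
    ∃ C > 0, ∀ F : R2 → ℂ, MemHs (1/2) F →
      (∃! ψ : HTildeElt (-(1/2) : ℝ) Γ, AgreeOn Γ (fun ξ => mT k ξ * ψ.ft ξ) F) ∧
      (∀ ψ : HTildeElt (-(1/2) : ℝ) Γ, AgreeOn Γ (fun ξ => mT k ξ * ψ.ft ξ) F →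
        wnorm (-(1/2)) ψ.ft ≤ C * wnorm (1/2) F) := by
  exact ⟨4 * (1 + k), by positivity, fun F hF =>
    statement18_general hΓ.1 hΓ.2.1 hΓ.hasSegmentProperty hk hF⟩

end
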